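/- Let (A, m_A) be a local Artinian C-algebra, L a dgLa over C, and consider the Maurer-Cartan set MC(L ⊗ m_A ⊗ A^*(Δ_•)) where A^*(Δ_n) are polynomial de Rham forms. Then the restriction map A^*(Δ_n) → A^*(Λ^k_n) to the k-th horn is a quasi-isomorphism, and consequently the obstruction to extending a Maurer-Cartan element from the k-th horn Λ^k_n to Δ_n along a small extension A → B vanishes: given compatible Maurer-Cartan elements on the faces of the horn with compatible lift over A, an extension to Δ_n over A exists. -/

import Mathlib

/-!
STATEMENT 14: The restriction map A^*(Δ_n) → A^*(Λ^k_n) to the k-th horn is a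
quasi-isomorphism, and consequently the obstruction to extending a
Maurer-Cartan element of L ⊗ m_A ⊗ A^*(Δ_•) from the k-th horn to Δ_n along a
small extension A → B vanishes: given compatible Maurer-Cartan elements on the
faces of the horn over A together with a compatible Maurer-Cartan lift over B
on the whole simplex, an extension to Δ_n over A exists.
(We work with simplices Δ_{n+2}, so that all coface maps involved exist;
A^*(Λ^k_{n+2}) is the space of tuples of forms on the facets ≠ k of Δ_{n+2}
compatible along intersections.)
-/

structure SimplexForms (n : ℕ) where
  A : Type
  [ringA : Ring A]
  [algA : Algebra ℂ A]
  grading : ℕ → Submodule ℂ A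
  [gradedA : GradedAlgebra grading]
  gcomm : ∀ (p q : ℕ) (a b : A), a ∈ grading p → b ∈ grading q →
    a * b = ((-1 : ℤ) ^ (p * q)) • (b * a)
  d : A →ₗ[ℂ] A
  d_mem : ∀ (q : ℕ) (a : A), a ∈ grading q → d a ∈ grading (q + 1)
  d_sq : ∀ a : A, d (d a) = 0
  leibniz : ∀ (p : ℕ) (a b : A), a ∈ grading p →
    d (a * b) = d a * b + ((-1 : ℤ) ^ p) • (a * d b)
  x : Fin (n + 1) → A
  x_mem : ∀ i, x i ∈ grading 0
  sum_x : ∑ i, x i = 1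
  sum_dx : ∑ i, d (x i) = 0

attribute [instance] SimplexForms.ringA SimplexForms.algA SimplexForms.gradedA

/-- `Ω` is the polynomial de Rham algebra `A^*(Δ_n)`: universal property. -/
def IsPolyDeRham {n : ℕ} (Ω : SimplexForms n) : Prop :=
  ∀ B : SimplexForms n, ∃! φ : Ω.A →ₐ[ℂ] B.A,
    (∀ a, φ (Ω.d a) = B.d (φ a)) ∧
    (∀ (p : ℕ) (a : Ω.A), a ∈ Ω.grading p → φ a ∈ B.grading p) ∧
    (∀ i, φ (Ω.x i) = B.x i)

/-- The property of being the pullback morphism `a^*` induced by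
`a : [n] → [m]`: a morphism of dgas (commuting with `d` and preserving the
grading) with `φ(x_j) = Σ_{i : a i = j} x_i`. -/
def PullbackProp {m n : ℕ} (Ωm : SimplexForms m) (Ωn : SimplexForms n)
    (a : Fin (n + 1) → Fin (m + 1)) (φ : Ωm.A →ₐ[ℂ] Ωn.A) : Prop :=
  (∀ y, φ (Ωm.d y) = Ωn.d (φ y)) ∧
  (∀ (p : ℕ) (y : Ωm.A), y ∈ Ωm.grading p → φ y ∈ Ωn.grading p) ∧
  (∀ j : Fin (m + 1),
    φ (Ωm.x j) = ∑ i ∈ Finset.univ.filter (fun i => a i = j), Ωn.x i)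


open TensorProduct

/-- the sign (-1)^n for n : ℤ. -/
def sgn (n : ℤ) : ℤ := ((-1 : ℤˣ) ^ n : ℤˣ)

/-- A (ℤ-graded) differential graded Lie algebra over ℂ. -/
structure GradedDGLA where
  L : Type
  [acg : AddCommGroup L]
  [mod : Module ℂ L]
  gr : ℤ → Submodule ℂ L
  br : L →ₗ[ℂ] L →ₗ[ℂ] L
  dL : L →ₗ[ℂ] L
  br_mem : ∀ (p q : ℤ) (v w : L), v ∈ gr p → w ∈ gr q → br v w ∈ gr (p + q)
  d_mem : ∀ (p : ℤ) (v : L), v ∈ gr p → dL v ∈ gr (p + 1)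
  d_sq : ∀ v : L, dL (dL v) = 0
  skew : ∀ (p q : ℤ) (v w : L), v ∈ gr p → w ∈ gr q →
    br v w = -(sgn (p * q) • br w v)
  jacobi : ∀ (p q : ℤ) (v w z : L), v ∈ gr p → w ∈ gr q →
    br v (br w z) = br (br v w) z + sgn (p * q) • br w (br v z)
  leib : ∀ (p : ℤ) (v w : L), v ∈ gr p →
    dL (br v w) = br (dL v) w + sgn p • br v (dL w)

attribute [instance] GradedDGLA.acg GradedDGLA.mod

/-- The submodule of `L ⊗ A ⊗ A^*(Δ_k)` of elements of total degree 1 with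
coefficients in the ideal `m ⊆ A`, i.e. `⊕_q L^{1-q} ⊗ m ⊗ A^q(Δ_k)`. -/
noncomputable def Deg1m (F : ∀ k, SimplexForms k) (L : GradedDGLA)
    (A : Type) [CommRing A] [Algebra ℂ A] (m : Submodule ℂ A) (k : ℕ) :
    Submodule ℂ ((L.L ⊗[ℂ] A) ⊗[ℂ] (F k).A) :=
  ⨆ q : ℕ, LinearMap.range
    (TensorProduct.map (TensorProduct.map (L.gr (1 - (q : ℤ))).subtype m.subtype)
      ((F k).grading q).subtype)

/-- The Maurer–Cartan condition for `φ ∈ L¹(⊗ m_A ⊗ A^*(Δ_k))`, relative to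
given total differential `D` and bracket `Br` on `L ⊗ A ⊗ A^*(Δ_k)`. -/
def IsMCsimp (F : ∀ k, SimplexForms k) (L : GradedDGLA)
    (A : Type) [CommRing A] [Algebra ℂ A] (m : Submodule ℂ A)
    (D : ∀ k, (L.L ⊗[ℂ] A) ⊗[ℂ] (F k).A →ₗ[ℂ] (L.L ⊗[ℂ] A) ⊗[ℂ] (F k).A)
    (Br : ∀ k, (L.L ⊗[ℂ] A) ⊗[ℂ] (F k).A →ₗ[ℂ]
      (L.L ⊗[ℂ] A) ⊗[ℂ] (F k).A →ₗ[ℂ] (L.L ⊗[ℂ] A) ⊗[ℂ] (F k).A)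
    (k : ℕ) (φ : (L.L ⊗[ℂ] A) ⊗[ℂ] (F k).A) : Prop :=
  φ ∈ Deg1m F L A m k ∧ D k φ + (1 / 2 : ℂ) • Br k φ φ = 0


/-- Compatibility of a tuple of forms on the facets `≠ k` of `Δ_{n+2}`, i.e. the
condition defining the space `A^*(Λ^k_{n+2})` of polynomial forms on the k-th
horn (equation (3.5)). -/
def HornCompat (F : ∀ k, SimplexForms k)
    (pb : ∀ (k : ℕ) (i : Fin (k + 2)), (F (k + 1)).A →ₐ[ℂ] (F k).A)
    (n : ℕ) (k : Fin (n + 3))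
    (t : ∀ i : Fin (n + 3), i ≠ k → (F (n + 1)).A) : Prop :=
  ∀ (i j : Fin (n + 3)) (hi : i ≠ k) (hj : j ≠ k) (hij : i.1 < j.1),
    pb n ⟨i.1, by have := j.isLt; omega⟩ (t j hj) =
      pb n ⟨j.1 - 1, by have := j.isLt; omega⟩ (t i hi)


/-! ### Auxiliary: dga homs out of a polynomial de Rham algebra -/

def IsDgaHom {m n : ℕ} (P : SimplexForms m) (Q : SimplexForms n) (f : P.A →ₐ[ℂ] Q.A) : Prop :=
  (∀ y, f (P.d y) = Q.d (f y)) ∧ (∀ (p : ℕ) (y : P.A), y ∈ P.grading p → f y ∈ Q.grading p)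

theorem IsDgaHom.comp {m n r : ℕ} {P : SimplexForms m} {Q : SimplexForms n} {R : SimplexForms r}
    {g : Q.A →ₐ[ℂ] R.A} {f : P.A →ₐ[ℂ] Q.A} (hg : IsDgaHom Q R g) (hf : IsDgaHom P Q f) :
    IsDgaHom P R (g.comp f) :=
  ⟨fun y => by simp [hf.1, hg.1], fun p y hy => hg.2 p _ (hf.2 p y hy)⟩

theorem IsDgaHom.id {m : ℕ} (P : SimplexForms m) : IsDgaHom P P (AlgHom.id ℂ P.A) :=
  ⟨fun _ => rfl, fun _ _ hy => hy⟩

theorem PullbackProp.dga {m n : ℕ} {P : SimplexForms m} {Q : SimplexForms n}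
    {a : Fin (n + 1) → Fin (m + 1)} {f : P.A →ₐ[ℂ] Q.A} (h : PullbackProp P Q a f) :
    IsDgaHom P Q f := ⟨h.1, h.2.1⟩

theorem SimplexForms.d_one {n : ℕ} (Q : SimplexForms n) : Q.d 1 = 0 := by
  have h := Q.leibniz 0 1 1 SetLike.GradedOne.one_mem
  simpa using h

/-- The same dga with other barycentric coordinates. -/
def SimplexForms.reX {n m : ℕ} (Q : SimplexForms n) (x' : Fin (m + 1) → Q.A)
    (hx : ∀ i, x' i ∈ Q.grading 0) (hs : ∑ i, x' i = 1) : SimplexForms m where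
  A := Q.A
  grading := Q.grading
  gcomm := Q.gcomm
  d := Q.d
  d_mem := Q.d_mem
  d_sq := Q.d_sq
  leibniz := Q.leibniz
  x := x'
  x_mem := hx
  sum_x := hs
  sum_dx := by rw [← map_sum, hs, Q.d_one]

theorem dga_hom_ext {m n : ℕ} {P : SimplexForms m} (hP : IsPolyDeRham P) {Q : SimplexForms n}
    {f g : P.A →ₐ[ℂ] Q.A} (hf : IsDgaHom P Q f) (hg : IsDgaHom P Q g)
    (h : ∀ i, f (P.x i) = g (P.x i)) : f = g := by
  have hs : ∑ i, f (P.x i) = 1 := by rw [← map_sum, P.sum_x, map_one]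
  exact (hP (Q.reX (fun i => f (P.x i)) (fun i => hf.2 _ _ (P.x_mem i)) hs)).unique
    ⟨hf.1, hf.2, fun _ => rfl⟩ ⟨hg.1, hg.2, fun i => (h i).symm⟩

theorem exists_pull {m n : ℕ} {P : SimplexForms m} (hP : IsPolyDeRham P) (Q : SimplexForms n)
    (a : Fin (n + 1) → Fin (m + 1)) : ∃ f, PullbackProp P Q a f := by
  have hs : ∑ j, ∑ i ∈ Finset.univ.filter (fun i => a i = j), Q.x i = 1 := by
    rw [Finset.sum_fiberwise, Q.sum_x]
  obtain ⟨f, hf, -⟩ := hP (Q.reX (fun j => ∑ i ∈ Finset.univ.filter (fun i => a i = j), Q.x i)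
    (fun j => Submodule.sum_mem _ fun i _ => Q.x_mem i) hs)
  exact ⟨f, hf⟩

theorem PullbackProp.comp {m n r : ℕ} {P : SimplexForms m} {Q : SimplexForms n}
    {R : SimplexForms r} {a : Fin (n + 1) → Fin (m + 1)} {b : Fin (r + 1) → Fin (n + 1)}
    {f : P.A →ₐ[ℂ] Q.A} {g : Q.A →ₐ[ℂ] R.A}
    (hf : PullbackProp P Q a f) (hg : PullbackProp Q R b g) :
    PullbackProp P R (a ∘ b) (g.comp f) := by
  refine ⟨(hg.dga.comp hf.dga).1, (hg.dga.comp hf.dga).2, fun j => ?_⟩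
  simp only [AlgHom.comp_apply, hf.2.2, map_sum, hg.2.2]
  rw [← Finset.sum_biUnion]
  · refine Finset.sum_congr ?_ fun _ _ => rfl
    ext i; simp
  · intro u _ v _ huv
    simp only [Function.onFun]
    rw [Finset.disjoint_left]
    intro i hi hj
    simp at hi hj
    exact huv (hi.symm.trans hj)

theorem PullbackProp.unique {m n : ℕ} {P : SimplexForms m} (hP : IsPolyDeRham P)
    {Q : SimplexForms n} {a : Fin (n + 1) → Fin (m + 1)} {f g : P.A →ₐ[ℂ] Q.A}
    (hf : PullbackProp P Q a f) (hg : PullbackProp P Q a g) : f = g :=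
  dga_hom_ext hP hf.dga hg.dga fun i => by rw [hf.2.2, hg.2.2]

theorem PullbackProp.id {m : ℕ} (P : SimplexForms m) :
    PullbackProp P P id (AlgHom.id ℂ P.A) :=
  ⟨fun _ => rfl, fun _ _ h => h, fun j => by simp [Finset.sum_filter]⟩

/-! ### Grading involution -/

theorem hom_lin_ext {n : ℕ} (Q : SimplexForms n) {M : Type*} [AddCommGroup M] [Module ℂ M]
    {f g : Q.A →ₗ[ℂ] M} (h : ∀ q, ∀ a ∈ Q.grading q, f a = g a) : f = g := by
  ext a
  refine DirectSum.Decomposition.inductionOn Q.grading (motive := fun a => f a = g a) (by simp)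
    (fun {i} m => h i _ m.2) (fun m m' h1 h2 => by simp [h1, h2]) a

noncomputable def tauL {n : ℕ} (Q : SimplexForms n) : Q.A →ₗ[ℂ] Q.A :=
  (DirectSum.toModule ℂ ℕ Q.A (fun q => ((-1 : ℤ) ^ q) • (Q.grading q).subtype)) ∘ₗ
    (DirectSum.decomposeLinearEquiv Q.grading).toLinearMap

theorem tauL_of_mem {n : ℕ} (Q : SimplexForms n) {q : ℕ} {a : Q.A} (ha : a ∈ Q.grading q) :
    tauL Q a = ((-1 : ℤ) ^ q) • a := by
  simp only [tauL, LinearMap.comp_apply, LinearEquiv.coe_coe,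
    DirectSum.decomposeLinearEquiv_apply, DirectSum.decompose_of_mem _ ha]
  rw [← DirectSum.lof_eq_of ℂ, DirectSum.toModule_lof]
  simp

theorem tauL_mul {n : ℕ} (Q : SimplexForms n) (a b : Q.A) :
    tauL Q (a * b) = tauL Q a * tauL Q b := by
  have : (LinearMap.mul ℂ Q.A).compr₂ (tauL Q) =
      (LinearMap.mul ℂ Q.A).compl₁₂ (tauL Q) (tauL Q) := by
    refine hom_lin_ext Q fun p a ha => hom_lin_ext Q fun q b hb => ?_
    simp only [LinearMap.compr₂_apply, LinearMap.mul_apply', LinearMap.compl₁₂_apply]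
    rw [tauL_of_mem Q ha, tauL_of_mem Q hb, tauL_of_mem Q (SetLike.GradedMul.mul_mem ha hb)]
    rw [smul_mul_smul_comm, pow_add]
  exact LinearMap.congr_fun₂ this a b

noncomputable def tau {n : ℕ} (Q : SimplexForms n) : Q.A →ₐ[ℂ] Q.A :=
  AlgHom.ofLinearMap (tauL Q)
    (by rw [tauL_of_mem Q (SetLike.GradedOne.one_mem)]; simp) (tauL_mul Q)

theorem tau_of_mem {n : ℕ} (Q : SimplexForms n) {q : ℕ} {a : Q.A} (ha : a ∈ Q.grading q) :
    tau Q a = ((-1 : ℤ) ^ q) • a := tauL_of_mem Q ha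

theorem tau_tau {n : ℕ} (Q : SimplexForms n) (a : Q.A) : tau Q (tau Q a) = a := by
  have : (tau Q).toLinearMap ∘ₗ (tau Q).toLinearMap = LinearMap.id :=
    hom_lin_ext Q fun p a ha => by
      simp only [LinearMap.comp_apply, AlgHom.toLinearMap_apply, LinearMap.id_apply]
      rw [tau_of_mem Q ha, map_zsmul, tau_of_mem Q ha, smul_smul, ← pow_add]
      simp
  exact LinearMap.congr_fun this a

theorem tau_d {n : ℕ} (Q : SimplexForms n) (a : Q.A) : tau Q (Q.d a) = - Q.d (tau Q a) := by
  have : (tau Q).toLinearMap ∘ₗ Q.d = - (Q.d ∘ₗ (tau Q).toLinearMap) :=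
    hom_lin_ext Q fun p a ha => by
      simp only [LinearMap.comp_apply, AlgHom.toLinearMap_apply, LinearMap.neg_apply]
      rw [tau_of_mem Q ha, tau_of_mem Q (Q.d_mem _ _ ha), map_zsmul, pow_succ]
      simp
  exact LinearMap.congr_fun this a

theorem d_mul {n : ℕ} (Q : SimplexForms n) (a b : Q.A) :
    Q.d (a * b) = Q.d a * b + tau Q a * Q.d b := by
  have : (LinearMap.mul ℂ Q.A).compr₂ Q.d =
      (LinearMap.mul ℂ Q.A) ∘ₗ Q.d +
        (LinearMap.mul ℂ Q.A).compl₁₂ (tau Q).toLinearMap Q.d := by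
    refine hom_lin_ext Q fun p a ha => LinearMap.ext fun b => ?_
    simp [Q.leibniz p a b ha, tau_of_mem Q ha, mul_assoc]
  have := LinearMap.congr_fun₂ this a b
  simpa using this

theorem dga_tau {m n : ℕ} {P : SimplexForms m} {Q : SimplexForms n} {f : P.A →ₐ[ℂ] Q.A}
    (hf : IsDgaHom P Q f) (a : P.A) : f (tau P a) = tau Q (f a) := by
  have : f.toLinearMap ∘ₗ (tau P).toLinearMap = (tau Q).toLinearMap ∘ₗ f.toLinearMap :=
    hom_lin_ext P fun p a ha => by
      simp [tau_of_mem P ha, tau_of_mem Q (hf.2 p a ha)]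
  exact LinearMap.congr_fun this a

theorem internal_of_proj {M : Type*} [AddCommGroup M] [Module ℂ M] (N : ℕ → Submodule ℂ M)
    (P : ℕ → M →ₗ[ℂ] M) (h1 : ∀ p, ∀ x ∈ N p, P p x = x)
    (h2 : ∀ p q, p ≠ q → ∀ x ∈ N p, P q x = 0) (h3 : ⨆ p, N p = ⊤) :
    DirectSum.IsInternal N := by
  refine DirectSum.isInternal_submodule_of_iSupIndep_of_iSup_eq_top ?_ h3
  intro i
  rw [Submodule.disjoint_def]
  intro x hx hx'
  have : (⨆ j, ⨆ (_ : j ≠ i), N j) ≤ LinearMap.ker (P i) :=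
    iSup_le fun j => iSup_le fun hj => fun y hy => h2 j i hj y hy
  rw [← h1 i x hx]
  exact this hx'

noncomputable def projL {n : ℕ} (Q : SimplexForms n) (p : ℕ) : Q.A →ₗ[ℂ] Q.A :=
  (Q.grading p).subtype ∘ₗ DirectSum.component ℂ ℕ (fun i => Q.grading i) p ∘ₗ
    (DirectSum.decomposeLinearEquiv Q.grading).toLinearMap

theorem projL_same {n : ℕ} (Q : SimplexForms n) (p : ℕ) (a : Q.A) (ha : a ∈ Q.grading p) :
    projL Q p a = a := by
  exact DirectSum.decompose_of_mem_same Q.grading ha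

theorem projL_ne {n : ℕ} (Q : SimplexForms n) (p q : ℕ) (h : p ≠ q) (a : Q.A)
    (ha : a ∈ Q.grading p) : projL Q q a = 0 := by
  exact DirectSum.decompose_of_mem_ne Q.grading ha h

/-! ### The cylinder `Ω[t, dt]` -/

section Cylinder

variable {n : ℕ} (Q : SimplexForms n)

abbrev TT : Type := Q.A ⊗[ℂ] Polynomial ℂ

noncomputable def tauT : TT Q →ₐ[ℂ] TT Q :=
  Algebra.TensorProduct.map (tau Q) (AlgHom.id ℂ (Polynomial ℂ))

noncomputable def dT : TT Q →ₗ[ℂ] TT Q := TensorProduct.map Q.d LinearMap.id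

noncomputable def delT : TT Q →ₗ[ℂ] TT Q := TensorProduct.map LinearMap.id Polynomial.derivative

@[simp] theorem tauT_tmul (a : Q.A) (f : Polynomial ℂ) :
    tauT Q (a ⊗ₜ f) = tau Q a ⊗ₜ f := by simp [tauT]
@[simp] theorem dT_tmul (a : Q.A) (f : Polynomial ℂ) : dT Q (a ⊗ₜ f) = Q.d a ⊗ₜ f := by simp [dT]
@[simp] theorem delT_tmul (a : Q.A) (f : Polynomial ℂ) :
    delT Q (a ⊗ₜ f) = a ⊗ₜ Polynomial.derivative f := by simp [delT]

theorem tauT_tauT (u : TT Q) : tauT Q (tauT Q u) = u := by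
  induction u using TensorProduct.induction_on with
  | zero => simp
  | tmul a f => simp [tau_tau]
  | add u v hu hv => simp [hu, hv]

theorem tauT_dT (u : TT Q) : tauT Q (dT Q u) = - dT Q (tauT Q u) := by
  induction u using TensorProduct.induction_on with
  | zero => simp
  | tmul a f => simp [tau_d, TensorProduct.neg_tmul]
  | add u v hu hv => simp [hu, hv]; abel

theorem dT_dT (u : TT Q) : dT Q (dT Q u) = 0 := by
  induction u using TensorProduct.induction_on with
  | zero => simp
  | tmul a f => simp [Q.d_sq]
  | add u v hu hv => simp [hu, hv]

theorem delT_dT (u : TT Q) : delT Q (dT Q u) = dT Q (delT Q u) := by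
  induction u using TensorProduct.induction_on with
  | zero => simp
  | tmul a f => simp
  | add u v hu hv => simp [hu, hv]

theorem dT_mul (u v : TT Q) : dT Q (u * v) = dT Q u * v + tauT Q u * dT Q v := by
  induction u using TensorProduct.induction_on with
  | zero => simp
  | tmul a f =>
    induction v using TensorProduct.induction_on with
    | zero => simp
    | tmul b g => simp [d_mul, TensorProduct.add_tmul]
    | add u v hu hv => simp only [mul_add, map_add, hu, hv]; abel
  | add u v hu hv => simp only [add_mul, map_add, hu, hv]; abel

theorem delT_mul (u v : TT Q) : delT Q (u * v) = delT Q u * v + u * delT Q v := by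
  induction u using TensorProduct.induction_on with
  | zero => simp
  | tmul a f =>
    induction v using TensorProduct.induction_on with
    | zero => simp
    | tmul b g => simp [TensorProduct.tmul_add]
    | add u v hu hv => simp only [mul_add, map_add, hu, hv]; abel
  | add u v hu hv => simp only [add_mul, map_add, hu, hv]; abel

/-- Coefficientwise grading on `Ω[t]`. -/
noncomputable def grT (p : ℕ) : Submodule ℂ (TT Q) :=
  Submodule.span ℂ {u | ∃ a ∈ Q.grading p, ∃ f : Polynomial ℂ, u = a ⊗ₜ f}

/-- Shifted grading. -/
noncomputable def grT1 : ℕ → Submodule ℂ (TT Q)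
  | 0 => ⊥
  | p + 1 => grT Q p

theorem tmul_mem_grT {p : ℕ} {a : Q.A} (ha : a ∈ Q.grading p) (f : Polynomial ℂ) :
    a ⊗ₜ f ∈ grT Q p := Submodule.subset_span ⟨a, ha, f, rfl⟩

theorem grT_induction {p : ℕ} {N : Type*} [AddCommGroup N] [Module ℂ N] (S : Submodule ℂ N)
    (F : TT Q →ₗ[ℂ] N) (h : ∀ a ∈ Q.grading p, ∀ f : Polynomial ℂ, F (a ⊗ₜ f) ∈ S)
    (u : TT Q) (hu : u ∈ grT Q p) : F u ∈ S := by
  have : grT Q p ≤ S.comap F := by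
    refine Submodule.span_le.2 ?_
    rintro _ ⟨a, ha, f, rfl⟩
    exact h a ha f
  exact this hu

theorem grT_ext {p : ℕ} {N : Type*} [AddCommGroup N] [Module ℂ N]
    (F G : TT Q →ₗ[ℂ] N) (h : ∀ a ∈ Q.grading p, ∀ f : Polynomial ℂ, F (a ⊗ₜ f) = G (a ⊗ₜ f))
    (u : TT Q) (hu : u ∈ grT Q p) : F u = G u := by
  have := grT_induction Q ⊥ (F - G) (p := p) (fun a ha f => by simp [h a ha f]) u hu
  simpa [sub_eq_zero] using this

theorem tauT_mem {p : ℕ} (u : TT Q) (hu : u ∈ grT Q p) : tauT Q u = ((-1 : ℤ) ^ p) • u := by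
  have := grT_ext Q (tauT Q).toLinearMap (((-1 : ℤ) ^ p) • LinearMap.id)
    (fun a ha f => by
      simp only [AlgHom.toLinearMap_apply, tauT_tmul, tau_of_mem Q ha, LinearMap.smul_apply,
        LinearMap.id_apply]
      rw [TensorProduct.smul_tmul']) u hu
  simpa only [AlgHom.toLinearMap_apply, LinearMap.smul_apply, LinearMap.id_apply] using this

theorem grT_comm {p q : ℕ} (u v : TT Q) (hu : u ∈ grT Q p) (hv : v ∈ grT Q q) :
    u * v = ((-1 : ℤ) ^ (p * q)) • (v * u) := by
  refine grT_ext Q (LinearMap.mulRight ℂ v) (((-1 : ℤ) ^ (p * q)) • LinearMap.mulLeft ℂ v)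
    (fun a ha f => ?_) u hu
  refine grT_ext Q (LinearMap.mulLeft ℂ (a ⊗ₜ f))
    (((-1 : ℤ) ^ (p * q)) • LinearMap.mulRight ℂ (a ⊗ₜ f)) (fun b hb g => ?_) v hv
  simp only [LinearMap.mulLeft_apply, LinearMap.mulRight_apply, LinearMap.smul_apply,
    Algebra.TensorProduct.tmul_mul_tmul, Q.gcomm p q a b ha hb, mul_comm f g]
  rw [TensorProduct.smul_tmul']

theorem grT_mul {p q : ℕ} (u v : TT Q) (hu : u ∈ grT Q p) (hv : v ∈ grT Q q) :
    u * v ∈ grT Q (p + q) := by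
  refine grT_induction Q _ (LinearMap.mulRight ℂ v) (fun a ha f => ?_) u hu
  refine grT_induction Q _ (LinearMap.mulLeft ℂ (a ⊗ₜ f)) (fun b hb g => ?_) v hv
  simp only [LinearMap.mulLeft_apply, Algebra.TensorProduct.tmul_mul_tmul]
  exact tmul_mem_grT Q (SetLike.GradedMul.mul_mem ha hb) _

theorem dT_mem {p : ℕ} (u : TT Q) (hu : u ∈ grT Q p) : dT Q u ∈ grT Q (p + 1) :=
  grT_induction Q _ (dT Q) (fun a ha f => by
    rw [dT_tmul]; exact tmul_mem_grT Q (Q.d_mem _ _ ha) _) u hu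

theorem delT_mem {p : ℕ} (u : TT Q) (hu : u ∈ grT Q p) : delT Q u ∈ grT Q p :=
  grT_induction Q _ (delT Q) (fun a ha f => by
    rw [delT_tmul]; exact tmul_mem_grT Q ha _) u hu

theorem iSup_grT : ⨆ p, grT Q p = ⊤ := by
  rw [eq_top_iff]
  rintro u -
  induction u using TensorProduct.induction_on with
  | zero => exact Submodule.zero_mem _
  | tmul a f =>
    refine DirectSum.Decomposition.inductionOn Q.grading
      (motive := fun a => a ⊗ₜ f ∈ ⨆ p, grT Q p) (by simp)
      (fun {i} m => Submodule.mem_iSup_of_mem i (tmul_mem_grT Q m.2 f))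
      (fun m m' h1 h2 => by rw [TensorProduct.add_tmul]; exact Submodule.add_mem _ h1 h2) a
  | add u v hu hv => exact Submodule.add_mem _ hu hv

noncomputable def projT (p : ℕ) : TT Q →ₗ[ℂ] TT Q := TensorProduct.map (projL Q p) LinearMap.id

noncomputable def projT1 : ℕ → TT Q →ₗ[ℂ] TT Q
  | 0 => 0
  | p + 1 => projT Q p

theorem projT_same (p : ℕ) (u : TT Q) (hu : u ∈ grT Q p) : projT Q p u = u :=
  grT_ext Q (projT Q p) LinearMap.id
    (fun a ha f => by simp [projT, projL_same Q p a ha]) u hu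

theorem projT_ne (p q : ℕ) (h : p ≠ q) (u : TT Q) (hu : u ∈ grT Q p) : projT Q q u = 0 :=
  grT_ext Q (projT Q q) 0 (fun a ha f => by simp [projT, projL_ne Q p q h a ha]) u hu

theorem projT1_same (p : ℕ) (u : TT Q) (hu : u ∈ grT1 Q p) : projT1 Q p u = u := by
  cases p with
  | zero => simpa [projT1, grT1, eq_comm] using hu
  | succ p => exact projT_same Q p u hu

theorem projT1_ne (p q : ℕ) (h : p ≠ q) (u : TT Q) (hu : u ∈ grT1 Q p) : projT1 Q q u = 0 := by
  cases q with
  | zero => simp [projT1]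
  | succ q =>
    cases p with
    | zero =>
      have : u = 0 := by simpa [grT1] using hu
      simp [this]
    | succ p => exact projT_ne Q p q (by omega) u hu

/-- `Ω[t] ⊕ dt Ω[t]`. -/
def Cyl : Type := TT Q × TT Q

def Cyl.a {n : ℕ} {Q : SimplexForms n} (u : Cyl Q) : TT Q := Prod.fst u
def Cyl.c {n : ℕ} {Q : SimplexForms n} (u : Cyl Q) : TT Q := Prod.snd u
def Cyl.mk {n : ℕ} {Q : SimplexForms n} (u v : TT Q) : Cyl Q := (u, v)

noncomputable instance : AddCommGroup (Cyl Q) := inferInstanceAs (AddCommGroup (TT Q × TT Q))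
noncomputable instance : Module ℂ (Cyl Q) := inferInstanceAs (Module ℂ (TT Q × TT Q))

variable {Q} in
@[ext] theorem Cyl.ext {u v : Cyl Q} (h1 : u.a = v.a) (h2 : u.c = v.c) : u = v := Prod.ext h1 h2

noncomputable instance : Mul (Cyl Q) := ⟨fun u v => Cyl.mk (u.a * v.a) (u.c * v.a + tauT Q u.a * v.c)⟩
noncomputable instance : One (Cyl Q) := ⟨Cyl.mk 1 0⟩

@[simp] theorem Cyl.mk_a (u v : TT Q) : (Cyl.mk u v).a = u := rfl
@[simp] theorem Cyl.mk_c (u v : TT Q) : (Cyl.mk u v).c = v := rfl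
@[simp] theorem Cyl.mul_fst (u v : Cyl Q) : (u * v).a = u.a * v.a := rfl
@[simp] theorem Cyl.mul_snd (u v : Cyl Q) : (u * v).c = u.c * v.a + tauT Q u.a * v.c := rfl
@[simp] theorem Cyl.one_fst : (1 : Cyl Q).a = 1 := rfl
@[simp] theorem Cyl.one_snd : (1 : Cyl Q).c = 0 := rfl
@[simp] theorem Cyl.zero_fst : (0 : Cyl Q).a = 0 := rfl
@[simp] theorem Cyl.zero_snd : (0 : Cyl Q).c = 0 := rfl
@[simp] theorem Cyl.add_fst (u v : Cyl Q) : (u + v).a = u.a + v.a := rfl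
@[simp] theorem Cyl.add_snd (u v : Cyl Q) : (u + v).c = u.c + v.c := rfl
@[simp] theorem Cyl.smul_fst (r : ℂ) (v : Cyl Q) : (r • v).a = r • v.a := rfl
@[simp] theorem Cyl.smul_snd (r : ℂ) (v : Cyl Q) : (r • v).c = r • v.c := rfl
@[simp] theorem Cyl.zsmul_fst (r : ℤ) (v : Cyl Q) : (r • v).a = r • v.a := rfl
@[simp] theorem Cyl.zsmul_snd (r : ℤ) (v : Cyl Q) : (r • v).c = r • v.c := rfl

noncomputable instance : Ring (Cyl Q) :=
  { (inferInstance : AddCommGroup (Cyl Q)), (inferInstance : Mul (Cyl Q)),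
    (inferInstance : One (Cyl Q)) with
    left_distrib := fun a b c => by ext <;> simp [mul_add]; abel
    right_distrib := fun a b c => by ext <;> simp [add_mul]; abel
    zero_mul := fun a => by ext <;> simp
    mul_zero := fun a => by ext <;> simp
    mul_assoc := fun a b c => by ext <;> simp [mul_assoc, add_mul, mul_add, add_assoc]
    one_mul := fun a => by ext <;> simp
    mul_one := fun a => by ext <;> simp }

noncomputable instance : Algebra ℂ (Cyl Q) :=
  Algebra.ofModule
    (fun r x y => by ext <;> simp [smul_mul_assoc, smul_add])
    (fun r x y => by ext <;> simp [mul_smul_comm, smul_add])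

noncomputable def Cyl.fstL : Cyl Q →ₗ[ℂ] TT Q := LinearMap.fst ℂ (TT Q) (TT Q)
noncomputable def Cyl.sndL : Cyl Q →ₗ[ℂ] TT Q := LinearMap.snd ℂ (TT Q) (TT Q)
noncomputable def Cyl.mkL {N : Type} [AddCommGroup N] [Module ℂ N] (F G : N →ₗ[ℂ] TT Q) :
    N →ₗ[ℂ] Cyl Q := LinearMap.prod F G
@[simp] theorem Cyl.fstL_apply (u : Cyl Q) : Cyl.fstL Q u = u.a := rfl
@[simp] theorem Cyl.sndL_apply (u : Cyl Q) : Cyl.sndL Q u = u.c := rfl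
@[simp] theorem Cyl.mkL_fst {N : Type} [AddCommGroup N] [Module ℂ N] (F G : N →ₗ[ℂ] TT Q) (x : N) :
    (Cyl.mkL Q F G x).a = F x := rfl
@[simp] theorem Cyl.mkL_snd {N : Type} [AddCommGroup N] [Module ℂ N] (F G : N →ₗ[ℂ] TT Q) (x : N) :
    (Cyl.mkL Q F G x).c = G x := rfl

noncomputable def Cyl.gr (p : ℕ) : Submodule ℂ (Cyl Q) :=
  (grT Q p).comap (Cyl.fstL Q) ⊓ (grT1 Q p).comap (Cyl.sndL Q)

theorem Cyl.mem_gr {p : ℕ} {u : Cyl Q} : u ∈ Cyl.gr Q p ↔ u.a ∈ grT Q p ∧ u.c ∈ grT1 Q p :=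
  Iff.rfl

theorem Cyl.internal : DirectSum.IsInternal (Cyl.gr Q) := by
  refine internal_of_proj _
    (fun p => Cyl.mkL Q (projT Q p ∘ₗ Cyl.fstL Q) (projT1 Q p ∘ₗ Cyl.sndL Q)) ?_ ?_ ?_
  · intro p u hu
    ext
    · simpa using projT_same Q p _ hu.1
    · simpa using projT1_same Q p _ hu.2
  · intro p q h u hu
    ext
    · simpa using projT_ne Q p q h _ hu.1
    · simpa using projT1_ne Q p q h _ hu.2
  · rw [eq_top_iff]
    rintro u -
    have h1 : ⨆ p, grT Q p ≤ (⨆ p, Cyl.gr Q p).comap (Cyl.mkL Q LinearMap.id 0) :=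
      iSup_le fun p v hv => Submodule.mem_iSup_of_mem p
        ⟨by simpa using hv, by simp⟩
    have h2 : ⨆ p, grT Q p ≤ (⨆ p, Cyl.gr Q p).comap (Cyl.mkL Q 0 LinearMap.id) :=
      iSup_le fun p v hv => Submodule.mem_iSup_of_mem (p + 1)
        ⟨by simp, by simpa [grT1] using hv⟩
    rw [iSup_grT] at h1 h2
    have h3 : u = Cyl.mkL Q LinearMap.id 0 u.a + Cyl.mkL Q 0 LinearMap.id u.c := by
      ext <;> simp
    rw [h3]
    exact Submodule.add_mem _ (h1 trivial) (h2 trivial)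

theorem grT1_mul_right {p q : ℕ} (u v : TT Q) (hu : u ∈ grT1 Q p) (hv : v ∈ grT Q q) :
    u * v ∈ grT1 Q (p + q) := by
  cases p with
  | zero =>
    have : u = 0 := by simpa [grT1] using hu
    simp [this]
  | succ p =>
    have := grT_mul Q u v hu hv
    rwa [show p + 1 + q = (p + q) + 1 by omega]

theorem grT1_mul_left {p q : ℕ} (u v : TT Q) (hu : u ∈ grT Q p) (hv : v ∈ grT1 Q q) :
    u * v ∈ grT1 Q (p + q) := by
  cases q with
  | zero =>
    have : v = 0 := by simpa [grT1] using hv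
    simp [this]
  | succ q => exact grT_mul Q u v hu hv

noncomputable instance Cyl.graded : GradedAlgebra (Cyl.gr Q) :=
  { (Cyl.internal Q).chooseDecomposition with
    one_mem := ⟨tmul_mem_grT Q SetLike.GradedOne.one_mem 1, by simp⟩
    mul_mem := fun p q u v hu hv => ⟨grT_mul Q _ _ hu.1 hv.1, by
      change u.c * v.a + tauT Q u.a * v.c ∈ grT1 Q (p + q)
      refine Submodule.add_mem _ (grT1_mul_right Q _ _ hu.2 hv.1) ?_
      rw [tauT_mem Q u.a hu.1, smul_mul_assoc]
      exact zsmul_mem (grT1_mul_left Q _ _ hu.1 hv.2) _⟩ }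

theorem grT1_comm {p q : ℕ} (u v : TT Q) (hu : u ∈ grT1 Q p) (hv : v ∈ grT Q q) :
    u * v = ((-1 : ℤ) ^ (p * q)) • (tauT Q v * u) := by
  cases p with
  | zero =>
    have : u = 0 := by simpa [grT1] using hu
    simp [this]
  | succ p =>
    rw [tauT_mem Q _ hv, smul_mul_assoc, smul_smul, grT_comm Q u v hu hv, ← pow_add]
    congr 1
    rw [show (p + 1) * q + q = p * q + 2 * q by ring, pow_add, pow_mul (-1 : ℤ) 2 q]
    simp

noncomputable def Cyl.d : Cyl Q →ₗ[ℂ] Cyl Q :=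
  Cyl.mkL Q (dT Q ∘ₗ Cyl.fstL Q) (delT Q ∘ₗ Cyl.fstL Q - dT Q ∘ₗ Cyl.sndL Q)

@[simp] theorem Cyl.d_fst (u : Cyl Q) : (Cyl.d Q u).a = dT Q u.a := rfl
@[simp] theorem Cyl.d_snd (u : Cyl Q) : (Cyl.d Q u).c = delT Q u.a - dT Q u.c := rfl

theorem grT1_tau {p : ℕ} (u : TT Q) (hu : u ∈ grT1 Q p) :
    ((-1 : ℤ) ^ p) • u = - tauT Q u := by
  cases p with
  | zero =>
    have : u = 0 := by simpa [grT1] using hu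
    simp [this]
  | succ p => rw [tauT_mem Q _ hu, pow_succ]; simp

noncomputable def cylForms {m : ℕ} (X : Fin (m + 1) → TT Q) (hX : ∀ i, X i ∈ grT Q 0)
    (hs : ∑ i, X i = 1) : SimplexForms m where
  A := Cyl Q
  grading := Cyl.gr Q
  gcomm := fun p q u v hu hv => by
    rw [Cyl.mem_gr] at hu hv
    ext
    · rw [Cyl.zsmul_fst, Cyl.mul_fst, Cyl.mul_fst]; exact grT_comm Q _ _ hu.1 hv.1
    · simp only [Cyl.mul_snd, Cyl.zsmul_snd]
      have h1 := grT1_comm Q _ _ hu.2 hv.1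
      have h2 := grT1_comm Q _ _ hv.2 hu.1
      have h3 : ((-1 : ℤ) ^ (p * q)) * ((-1 : ℤ) ^ (p * q)) = 1 := by
        rw [← mul_pow]; simp
      rw [h1, h2, mul_comm q p, smul_add, smul_smul, h3, one_smul, add_comm]
  d := Cyl.d Q
  d_mem := fun q u hu => ⟨dT_mem Q _ hu.1, by
    change delT Q u.a - dT Q u.c ∈ grT1 Q (q + 1)
    refine Submodule.sub_mem _ (delT_mem Q _ hu.1) ?_
    cases q with
    | zero =>
      have : u.c = 0 := by simpa [grT1] using hu.2
      simp [this]
    | succ p => exact dT_mem Q _ hu.2⟩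
  d_sq := fun u => by
    ext
    · simpa using dT_dT Q _
    · simp [dT_dT, delT_dT]
  leibniz := fun p u v hu => by
    rw [Cyl.mem_gr] at hu
    ext
    · rw [Cyl.add_fst, Cyl.zsmul_fst]
      simp only [Cyl.d_fst, Cyl.mul_fst, dT_mul]
      rw [tauT_mem Q _ hu.1, smul_mul_assoc]
    · simp only [Cyl.d_snd, Cyl.mul_snd, Cyl.mul_fst, Cyl.add_snd, Cyl.zsmul_snd, Cyl.d_fst,
        map_add, dT_mul, delT_mul, tauT_tauT, tauT_dT]
      rw [smul_add, ← smul_mul_assoc, ← smul_mul_assoc, ← map_zsmul, grT1_tau Q _ hu.2,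
        ← tauT_mem Q _ hu.1, tauT_tauT]
      have hneg : ∀ x y : TT Q, -x * y = -(x * y) := fun x y => neg_mul x y
      simp only [sub_mul, mul_sub, hneg]
      abel
  x := fun i => Cyl.mk (X i) 0
  x_mem := fun i => (Cyl.mem_gr Q).2 ⟨hX i, Submodule.zero_mem (grT1 Q 0)⟩
  sum_x := by
    have : (fun i => (Cyl.mk (X i) 0 : Cyl Q)) = fun i => Cyl.mkL Q LinearMap.id 0 (X i) := rfl
    rw [this, ← map_sum, hs]; rfl
  sum_dx := by
    have : (fun i => Cyl.d Q (Cyl.mk (X i) 0 : Cyl Q)) =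
      fun i => Cyl.d Q (Cyl.mkL Q LinearMap.id 0 (X i)) := rfl
    rw [this, ← map_sum, ← map_sum, hs]
    have h1 : dT Q 1 = 0 := by
      rw [Algebra.TensorProduct.one_def, dT_tmul, Q.d_one]; simp
    have h2 : delT Q 1 = 0 := by
      rw [Algebra.TensorProduct.one_def, delT_tmul]; simp
    ext <;> simp [h1, h2]

end Cylinder

/-! ### The contracting homotopy -/

section Homotopy

noncomputable def intP : Polynomial ℂ →ₗ[ℂ] ℂ :=
  Polynomial.lsum (fun n => ((1 : ℂ) / ((n : ℂ) + 1)) • LinearMap.id)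

theorem intP_derivative (f : Polynomial ℂ) :
    intP (Polynomial.derivative f) = f.eval 1 - f.eval 0 := by
  induction f using Polynomial.induction_on' with
  | add p q hp hq => simp only [map_add, hp, hq, Polynomial.eval_add]; ring
  | monomial m a =>
    rw [Polynomial.derivative_monomial]
    simp only [intP, Polynomial.lsum_apply]
    rw [Polynomial.sum_monomial_index _ _ (by simp)]
    cases m with
    | zero => simp
    | succ m =>
      have : (m : ℂ) + 1 ≠ 0 := Nat.cast_add_one_ne_zero m
      simp
      field_simp

variable {n : ℕ} (Q : SimplexForms n)

noncomputable def intT : TT Q →ₗ[ℂ] Q.A :=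
  (TensorProduct.rid ℂ Q.A).toLinearMap ∘ₗ TensorProduct.map LinearMap.id intP

@[simp] theorem intT_tmul (a : Q.A) (f : Polynomial ℂ) : intT Q (a ⊗ₜ f) = intP f • a := by
  simp [intT]

noncomputable def evT (z : ℂ) : TT Q →ₐ[ℂ] Q.A :=
  (Algebra.TensorProduct.rid ℂ ℂ Q.A).toAlgHom.comp
    (Algebra.TensorProduct.map (AlgHom.id ℂ Q.A) (Polynomial.aeval z))

@[simp] theorem evT_tmul (z : ℂ) (a : Q.A) (f : Polynomial ℂ) :
    evT Q z (a ⊗ₜ f) = f.eval z • a := by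
  simp [evT, Polynomial.aeval_def, Polynomial.eval₂_eq_eval_map]

theorem intT_delT (u : TT Q) : intT Q (delT Q u) = evT Q 1 u - evT Q 0 u := by
  induction u using TensorProduct.induction_on with
  | zero => simp
  | tmul a f => simp [intP_derivative, sub_smul]
  | add u v hu hv => simp only [map_add, hu, hv]; abel

theorem intT_dT (u : TT Q) : intT Q (dT Q u) = Q.d (intT Q u) := by
  induction u using TensorProduct.induction_on with
  | zero => simp
  | tmul a f => simp
  | add u v hu hv => simp only [map_add, hu, hv]

theorem evT_dT (z : ℂ) (u : TT Q) : evT Q z (dT Q u) = Q.d (evT Q z u) := by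
  induction u using TensorProduct.induction_on with
  | zero => simp
  | tmul a f => simp
  | add u v hu hv => simp only [map_add, hu, hv]

noncomputable def evCyl (z : ℂ) : Cyl Q →ₐ[ℂ] Q.A :=
  AlgHom.ofLinearMap ((evT Q z).toLinearMap ∘ₗ Cyl.fstL Q) (by simp) (by simp)

theorem evCyl_apply (z : ℂ) (u : Cyl Q) : evCyl Q z u = evT Q z u.a := rfl

noncomputable def mapT (e : Q.A →ₐ[ℂ] Q.A) : TT Q →ₐ[ℂ] TT Q :=
  Algebra.TensorProduct.map e (AlgHom.id ℂ (Polynomial ℂ))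

@[simp] theorem mapT_tmul (e : Q.A →ₐ[ℂ] Q.A) (a : Q.A) (f : Polynomial ℂ) :
    mapT Q e (a ⊗ₜ f) = e a ⊗ₜ f := by simp [mapT]

variable {Q}

theorem mapT_tauT {e : Q.A →ₐ[ℂ] Q.A} (he : IsDgaHom Q Q e) (u : TT Q) :
    mapT Q e (tauT Q u) = tauT Q (mapT Q e u) := by
  induction u using TensorProduct.induction_on with
  | zero => simp
  | tmul a f => simp [dga_tau he]
  | add u v hu hv => simp only [map_add, hu, hv]

theorem mapT_dT {e : Q.A →ₐ[ℂ] Q.A} (he : IsDgaHom Q Q e) (u : TT Q) :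
    mapT Q e (dT Q u) = dT Q (mapT Q e u) := by
  induction u using TensorProduct.induction_on with
  | zero => simp
  | tmul a f => simp [he.1]
  | add u v hu hv => simp only [map_add, hu, hv]

theorem mapT_delT (e : Q.A →ₐ[ℂ] Q.A) (u : TT Q) :
    mapT Q e (delT Q u) = delT Q (mapT Q e u) := by
  induction u using TensorProduct.induction_on with
  | zero => simp
  | tmul a f => simp
  | add u v hu hv => simp only [map_add, hu, hv]

theorem mapT_intT (e : Q.A →ₐ[ℂ] Q.A) (u : TT Q) :
    intT Q (mapT Q e u) = e (intT Q u) := by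
  induction u using TensorProduct.induction_on with
  | zero => simp
  | tmul a f => simp
  | add u v hu hv => simp only [map_add, hu, hv]

theorem mapT_mem {e : Q.A →ₐ[ℂ] Q.A} (he : IsDgaHom Q Q e) {p : ℕ} (u : TT Q)
    (hu : u ∈ grT Q p) : mapT Q e u ∈ grT Q p :=
  grT_induction Q _ (mapT Q e).toLinearMap (fun a ha f => by
    simp only [AlgHom.toLinearMap_apply, mapT_tmul]
    exact tmul_mem_grT Q (he.2 _ _ ha) _) u hu

noncomputable def mapCyl {e : Q.A →ₐ[ℂ] Q.A} (he : IsDgaHom Q Q e) : Cyl Q →ₐ[ℂ] Cyl Q :=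
  AlgHom.ofLinearMap
    (Cyl.mkL Q ((mapT Q e).toLinearMap ∘ₗ Cyl.fstL Q) ((mapT Q e).toLinearMap ∘ₗ Cyl.sndL Q))
    (by ext <;> simp) (fun u v => by ext <;> simp [mapT_tauT he])

theorem mapCyl_a {e : Q.A →ₐ[ℂ] Q.A} (he : IsDgaHom Q Q e) (u : Cyl Q) :
    (mapCyl he u).a = mapT Q e u.a := rfl
theorem mapCyl_c {e : Q.A →ₐ[ℂ] Q.A} (he : IsDgaHom Q Q e) (u : Cyl Q) :
    (mapCyl he u).c = mapT Q e u.c := rfl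

/-- The coordinates of the contraction to the vertex `k`. -/
noncomputable def contrX (Q : SimplexForms n) (k j : Fin (n + 1)) : TT Q :=
  Q.x j ⊗ₜ Polynomial.X + if k = j then 1 ⊗ₜ (1 - Polynomial.X) else 0

theorem exists_homotopy (hQ : IsPolyDeRham Q) (k : Fin (n + 1)) :
    ∃ h : Q.A →ₗ[ℂ] Q.A,
      (∀ a ∈ Q.grading 0, h a = 0) ∧
      (∀ p, ∀ a ∈ Q.grading (p + 1), h a ∈ Q.grading p) ∧
      (∀ ε, PullbackProp Q Q (fun _ => k) ε → ∀ a, Q.d (h a) + h (Q.d a) = a - ε a) ∧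
      (∀ c : Fin (n + 1) → Fin (n + 1), c k = k → ∀ e, PullbackProp Q Q c e →
        ∀ a, e (h a) = h (e a)) := by
  have hX : ∀ j, contrX Q k j ∈ grT Q 0 := by
    intro j
    refine Submodule.add_mem _ (tmul_mem_grT Q (Q.x_mem j) _) ?_
    split_ifs
    · exact tmul_mem_grT Q SetLike.GradedOne.one_mem _
    · exact Submodule.zero_mem _
  have hs : ∑ j, contrX Q k j = 1 := by
    simp only [contrX, Finset.sum_add_distrib, ← TensorProduct.sum_tmul, Q.sum_x,
      Finset.sum_ite_eq, Finset.mem_univ, if_true]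
    rw [← TensorProduct.tmul_add, Algebra.TensorProduct.one_def]
    congr 1
    ring
  let C : SimplexForms n := cylForms Q (contrX Q k) hX hs
  obtain ⟨Φ, hd, hg, hx'⟩ : ∃ Φ : Q.A →ₐ[ℂ] Cyl Q, (∀ a, Φ (Q.d a) = Cyl.d Q (Φ a)) ∧
      (∀ (p : ℕ) (a : Q.A), a ∈ Q.grading p → Φ a ∈ Cyl.gr Q p) ∧
      (∀ j, Φ (Q.x j) = Cyl.mk (contrX Q k j) 0) := by
    obtain ⟨Φ, h, -⟩ := hQ C
    exact ⟨Φ, h⟩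
  have hΦ : IsDgaHom Q C Φ := ⟨hd, hg⟩
  have hev : ∀ z, IsDgaHom C Q (evCyl Q z) := by
    intro z
    refine ⟨fun u => evT_dT Q z u.a, fun p u hu => ?_⟩
    refine grT_induction Q _ (evT Q z).toLinearMap (fun a ha f => ?_) u.a hu.1
    simp only [AlgHom.toLinearMap_apply, evT_tmul]
    exact Submodule.smul_mem _ _ ha
  have hev1 : (evCyl Q 1).comp Φ = AlgHom.id ℂ Q.A := by
    refine dga_hom_ext hQ ((hev 1).comp hΦ) (IsDgaHom.id Q) fun i => ?_
    rw [AlgHom.comp_apply, hx', evCyl_apply, Cyl.mk_a, contrX]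
    split_ifs <;> simp
  refine ⟨intT Q ∘ₗ Cyl.sndL Q ∘ₗ Φ.toLinearMap, ?_, ?_, ?_, ?_⟩
  · intro a ha
    have h1 : (Φ a).c ∈ grT1 Q 0 := (hg 0 a ha).2
    have h2 : (Φ a).c = 0 := by simpa [grT1] using h1
    change intT Q (Φ a).c = 0
    rw [h2, map_zero]
  · intro p a ha
    have h1 : (Φ a).c ∈ grT Q p := (hg (p + 1) a ha).2
    change intT Q (Φ a).c ∈ _
    refine grT_induction Q _ (intT Q) (fun a ha f => ?_) _ h1
    rw [intT_tmul]
    exact Submodule.smul_mem _ _ ha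
  · intro ε hε a
    have hev0 : (evCyl Q 0).comp Φ = ε := by
      refine dga_hom_ext hQ ((hev 0).comp hΦ) hε.dga fun i => ?_
      rw [AlgHom.comp_apply, hx', evCyl_apply, Cyl.mk_a, contrX, hε.2.2, Finset.sum_filter]
      split_ifs <;> simp [Q.sum_x]
    have h1 : Φ (Q.d a) = Cyl.d Q (Φ a) := hd a
    change Q.d (intT Q (Φ a).c) + intT Q (Φ (Q.d a)).c = _
    rw [h1, Cyl.d_snd, map_sub, intT_delT, intT_dT]
    have h2 : evT Q 1 (Φ a).a = a := DFunLike.congr_fun hev1 a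
    have h3 : evT Q 0 (Φ a).a = ε a := DFunLike.congr_fun hev0 a
    rw [h2, h3]
    abel
  · intro c hc e he a
    have hM : IsDgaHom C C (mapCyl he.dga) := by
      refine ⟨fun u => ?_, fun p u hu => ⟨mapT_mem he.dga _ hu.1, ?_⟩⟩
      · refine Cyl.ext (mapT_dT he.dga u.a) ?_
        change mapT Q e (delT Q u.a - dT Q u.c) = delT Q (mapT Q e u.a) - dT Q (mapT Q e u.c)
        rw [map_sub, mapT_dT he.dga, mapT_delT]
      · cases p with
        | zero =>
          have h1 : u.c ∈ grT1 Q 0 := hu.2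
          have h2 : u.c = 0 := by simpa [grT1] using h1
          change mapT Q e u.c ∈ grT1 Q 0
          rw [h2, map_zero]
          exact Submodule.zero_mem _
        | succ p => exact mapT_mem he.dga u.c hu.2
    have key : (mapCyl he.dga).comp Φ = Φ.comp e := by
      refine dga_hom_ext hQ (hM.comp hΦ) (hΦ.comp he.dga) fun j => ?_
      change mapCyl he.dga (Φ (Q.x j)) = Φ (e (Q.x j))
      rw [he.2.2, map_sum, hx']
      simp only [hx']
      have h1 : ∀ s : Finset (Fin (n + 1)), ∑ i ∈ s, (Cyl.mk (contrX Q k i) 0 : Cyl Q) =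
          Cyl.mk (∑ i ∈ s, contrX Q k i) 0 := fun s =>
        (map_sum (Cyl.mkL Q LinearMap.id 0) (contrX Q k) s).symm
      refine Eq.trans ?_ (h1 _).symm
      refine Cyl.ext ?_ (by rw [mapCyl_c]; simp)
      rw [mapCyl_a, Cyl.mk_a, Cyl.mk_a]
      simp only [contrX, Finset.sum_add_distrib, ← TensorProduct.sum_tmul, map_add, mapT_tmul,
        he.2.2]
      congr 1
      rw [Finset.sum_ite_eq]
      simp only [Finset.mem_filter, Finset.mem_univ, true_and, hc]
      split_ifs <;> simp
    change e (intT Q (Φ a).c) = intT Q (Φ (e a)).c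
    rw [← mapT_intT]
    have h5 : mapCyl he.dga (Φ a) = Φ (e a) := DFunLike.congr_fun key a
    rw [← h5, mapCyl_c]

end Homotopy

/-! ### Sections of the facet restrictions, extension from horns -/

section Horn

theorem horn_ext_abstract {I M M' M'' : Type*} [Finite I] [AddCommGroup M] [AddCommGroup M']
    [AddCommGroup M''] [Module ℂ M] [Module ℂ M'] [Module ℂ M'']
    (res : I → M →ₗ[ℂ] M') (σ : I → M' →ₗ[ℂ] M) (rr : I → I → M' →ₗ[ℂ] M'')
    (G : I → I → M'' →ₗ[ℂ] M')
    (S : Submodule ℂ M) (S' : Submodule ℂ M') (t : I → M')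
    (h1 : ∀ i u, res i (σ i u) = u)
    (h2 : ∀ i j, i ≠ j → ∀ u, res i (σ j u) = G i j (rr j i u))
    (h3 : ∀ i j, i ≠ j → ∀ w, rr j i (res j w) = rr i j (res i w))
    (h4 : ∀ i j, i ≠ j → rr j i (t j) = rr i j (t i))
    (hS1 : ∀ i, ∀ w ∈ S, res i w ∈ S') (hS2 : ∀ i, ∀ u ∈ S', σ i u ∈ S)
    (ht : ∀ i, t i ∈ S') : ∃ w ∈ S, ∀ i, res i w = t i := by
  classical
  cases nonempty_fintype I
  have key : ∀ s : Finset I, ∃ w ∈ S, ∀ i ∈ s, res i w = t i := by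
    intro s
    induction s using Finset.induction_on with
    | empty => exact ⟨0, S.zero_mem, by simp⟩
    | insert j s hj ih =>
      obtain ⟨w, hw, hws⟩ := ih
      refine ⟨w + σ j (t j - res j w), S.add_mem hw (hS2 j _ (S'.sub_mem (ht j) (hS1 j w hw))), ?_⟩
      intro i hi
      by_cases hij : i = j
      · subst hij
        rw [map_add, h1]; abel
      · have his : i ∈ s := by simpa [hij] using hi
        rw [map_add, h2 i j hij, map_sub, h4 i j hij, h3 i j hij, hws i his]
        simp
  obtain ⟨w, hw, h⟩ := key Finset.univ
  exact ⟨w, hw, fun i => h i (Finset.mem_univ i)⟩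

/-- Position of the vertex `i` in the facet opposite to `j`. -/
theorem exists_pos (n : ℕ) : ∃ q : Fin (n + 3) → Fin (n + 3) → Fin (n + 2),
    ∀ j i : Fin (n + 3), i ≠ j → j.succAbove (q j i) = i := by
  have : ∀ j i : Fin (n + 3), ∃ q : Fin (n + 2), i ≠ j → j.succAbove q = i := by
    intro j i
    by_cases h : i = j
    · exact ⟨0, fun h' => absurd h h'⟩
    · obtain ⟨q, hq⟩ := Fin.exists_succAbove_eq h
      exact ⟨q, fun _ => hq⟩
  choose q hq using this
  exact ⟨q, hq⟩

theorem pos_lt {n : ℕ} {q : Fin (n + 3) → Fin (n + 3) → Fin (n + 2)}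
    (hq : ∀ j i : Fin (n + 3), i ≠ j → j.succAbove (q j i) = i) (i j : Fin (n + 3)) (hij : i.1 < j.1) :
    q j i = ⟨i.1, by have := j.isLt; omega⟩ ∧ q i j = ⟨j.1 - 1, by have := j.isLt; omega⟩ := by
  have hne : i ≠ j := fun h => by simp [h] at hij
  constructor
  · apply Fin.succAbove_right_injective (p := j)
    rw [hq j i hne]
    have hlt : Fin.castSucc (⟨i.1, by have := j.isLt; omega⟩ : Fin (n + 2)) < j := hij
    rw [Fin.succAbove_of_castSucc_lt _ _ hlt]
    rfl
  · apply Fin.succAbove_right_injective (p := i)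
    rw [hq i j hne.symm]
    have hlt : i ≤ Fin.castSucc (⟨j.1 - 1, by have := j.isLt; omega⟩ : Fin (n + 2)) := by
      rw [Fin.le_def]; simp; omega
    rw [Fin.succAbove_of_le_castSucc _ _ hlt]
    ext
    simp; omega


theorem exists_section
    (F : ∀ k, SimplexForms k) (hF : ∀ k, IsPolyDeRham (F k))
    (pb : ∀ (k : ℕ) (i : Fin (k + 2)), (F (k + 1)).A →ₐ[ℂ] (F k).A)
    (hpb : ∀ (k : ℕ) (i : Fin (k + 2)),
      PullbackProp (F (k + 1)) (F k) (Fin.succAbove i) (pb k i))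
    (n : ℕ) (k : Fin (n + 3))
    (i : Fin (n + 3)) (hi : i ≠ k) :
    ∃ σ : (F (n + 1)).A →ₐ[ℂ] (F (n + 2)).A,
      IsDgaHom (F (n + 1)) (F (n + 2)) σ ∧ (∀ a, pb (n + 1) i (σ a) = a) ∧
      PullbackProp (F (n + 2)) (F (n + 2)) (fun v => if v = i then k else v)
        (σ.comp (pb (n + 1) i)) ∧
      ∀ i' : Fin (n + 2), i.succAbove i' ≠ k → ∃ G : (F n).A →ₐ[ℂ] (F (n + 1)).A,
        ∀ u, pb (n + 1) (i.succAbove i') (σ u) = G (pb n i' u) := by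
  have hs : ∀ v : Fin (n + 3), ∃ w : Fin (n + 2), i.succAbove w = if v = i then k else v := by
    intro v
    refine Fin.exists_succAbove_eq ?_
    split_ifs with h
    · exact hi.symm
    · exact h
  choose s hs using hs
  obtain ⟨σ, hσ⟩ := exists_pull (hF (n + 1)) (F (n + 2)) s
  refine ⟨σ, hσ.dga, ?_, ?_, ?_⟩
  · have h1 := hσ.comp (hpb (n + 1) i)
    have h2 : s ∘ i.succAbove = id := by
      funext v
      apply Fin.succAbove_right_injective (p := i)
      simp [hs, Fin.succAbove_ne]
    rw [h2] at h1
    have h3 := PullbackProp.unique (hF (n + 1)) h1 (PullbackProp.id _)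
    exact fun a => DFunLike.congr_fun h3 a
  · have h1 := (hpb (n + 1) i).comp hσ
    have h2 : i.succAbove ∘ s = fun v => if v = i then k else v := funext hs
    rwa [h2] at h1
  · intro i' hi'
    have h1 := hσ.comp (hpb (n + 1) (i.succAbove i'))
    have hg : ∀ v : Fin (n + 2), ∃ w : Fin (n + 1),
        i'.succAbove w = s ((i.succAbove i').succAbove v) := by
      intro v
      refine Fin.exists_succAbove_eq ?_
      intro h
      have h' := hs ((i.succAbove i').succAbove v)
      rw [h] at h'
      split_ifs at h' with h''
      · exact hi' h'
      · exact Fin.succAbove_ne _ _ h'.symm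
    choose g hg using hg
    obtain ⟨G, hG⟩ := exists_pull (hF n) (F (n + 1)) g
    have h2 := (hpb n i').comp hG
    have h3 : i'.succAbove ∘ g = s ∘ (i.succAbove i').succAbove := funext hg
    rw [h3] at h2
    have h4 := PullbackProp.unique (hF (n + 1)) h1 h2
    exact ⟨G, fun u => DFunLike.congr_fun h4 u⟩

theorem pb_comm
    (F : ∀ k, SimplexForms k) (hF : ∀ k, IsPolyDeRham (F k))
    (pb : ∀ (k : ℕ) (i : Fin (k + 2)), (F (k + 1)).A →ₐ[ℂ] (F k).A)
    (hpb : ∀ (k : ℕ) (i : Fin (k + 2)),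
      PullbackProp (F (k + 1)) (F k) (Fin.succAbove i) (pb k i))
    (n : ℕ)
    {q : Fin (n + 3) → Fin (n + 3) → Fin (n + 2)}
    (hq : ∀ j i : Fin (n + 3), i ≠ j → j.succAbove (q j i) = i) (i j : Fin (n + 3)) (hij : i ≠ j)
    (w : (F (n + 2)).A) :
    pb n (q j i) (pb (n + 1) j w) = pb n (q i j) (pb (n + 1) i w) := by
  have h1 := (hpb (n + 1) j).comp (hpb n (q j i))
  have h2 := (hpb (n + 1) i).comp (hpb n (q i j))
  have h3 : j.succAbove ∘ (q j i).succAbove = i.succAbove ∘ (q i j).succAbove := by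
    have main : ∀ i j : Fin (n + 3), i.1 < j.1 →
        j.succAbove ∘ (q j i).succAbove = i.succAbove ∘ (q i j).succAbove := by
      intro i j hlt
      obtain ⟨e1, e2⟩ := pos_lt hq i j hlt
      funext v
      rw [e1, e2]
      simp only [Function.comp_apply, Fin.succAbove, Fin.ext_iff, Fin.lt_def]
      split_ifs <;> simp at * <;> omega
    rcases lt_or_gt_of_ne (fun h => hij (Fin.ext h) : i.1 ≠ j.1) with h | h
    · exact main i j h
    · exact (main j i h).symm
  rw [h3] at h1
  exact DFunLike.congr_fun (PullbackProp.unique (hF (n + 2)) h1 h2) w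

/-- Extension from the horn with coefficients in `V`. -/
theorem horn_extend_V
    (F : ∀ k, SimplexForms k) (hF : ∀ k, IsPolyDeRham (F k))
    (pb : ∀ (k : ℕ) (i : Fin (k + 2)), (F (k + 1)).A →ₐ[ℂ] (F k).A)
    (hpb : ∀ (k : ℕ) (i : Fin (k + 2)),
      PullbackProp (F (k + 1)) (F k) (Fin.succAbove i) (pb k i))
    (n : ℕ) (k : Fin (n + 3))
    (V : Type*) [AddCommGroup V] [Module ℂ V]
    (S : Submodule ℂ (V ⊗[ℂ] (F (n + 2)).A)) (S' : Submodule ℂ (V ⊗[ℂ] (F (n + 1)).A))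
    (hS1 : ∀ f : (F (n + 2)).A →ₐ[ℂ] (F (n + 1)).A, IsDgaHom _ _ f →
      ∀ w ∈ S, LinearMap.lTensor V f.toLinearMap w ∈ S')
    (hS2 : ∀ f : (F (n + 1)).A →ₐ[ℂ] (F (n + 2)).A, IsDgaHom _ _ f →
      ∀ w ∈ S', LinearMap.lTensor V f.toLinearMap w ∈ S)
    (t : ∀ i : Fin (n + 3), i ≠ k → V ⊗[ℂ] (F (n + 1)).A)
    (hc : ∀ (i j : Fin (n + 3)) (hi : i ≠ k) (hj : j ≠ k) (hij : i.1 < j.1),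
      LinearMap.lTensor V (pb n ⟨i.1, by have := j.isLt; omega⟩).toLinearMap (t j hj) =
      LinearMap.lTensor V (pb n ⟨j.1 - 1, by have := j.isLt; omega⟩).toLinearMap (t i hi))
    (ht : ∀ i hi, t i hi ∈ S') :
    ∃ w ∈ S, ∀ i (hi : i ≠ k), LinearMap.lTensor V (pb (n + 1) i).toLinearMap w = t i hi := by
  obtain ⟨q, hq⟩ := exists_pos n
  choose σ hσ1 hσ2 hσ3 hσ4 using exists_section F hF pb hpb n k
  have hG : ∀ i j : {i : Fin (n + 3) // i ≠ k}, ∃ G : (F n).A →ₐ[ℂ] (F (n + 1)).A, i ≠ j →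
      ∀ u, pb (n + 1) i (σ j.1 j.2 u) = G (pb n (q j i) u) := by
    intro i j
    by_cases hij : i = j
    · obtain ⟨G, -⟩ := exists_pull (hF n) (F (n + 1)) (fun _ => 0)
      exact ⟨G, fun h => absurd hij h⟩
    · have hij' : i.1 ≠ j.1 := fun h => hij (Subtype.ext h)
      obtain ⟨G, hG⟩ := hσ4 j.1 j.2 (q j i) (by rw [hq j i hij']; exact i.2)
      rw [hq j i hij'] at hG
      exact ⟨G, fun _ => hG⟩
  choose G hG using hG
  obtain ⟨w, hw, h⟩ := horn_ext_abstract (I := {i : Fin (n + 3) // i ≠ k})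
    (fun i => LinearMap.lTensor V (pb (n + 1) i).toLinearMap)
    (fun i => LinearMap.lTensor V (σ i.1 i.2).toLinearMap)
    (fun j i => LinearMap.lTensor V (pb n (q j i)).toLinearMap)
    (fun i j => LinearMap.lTensor V (G i j).toLinearMap) S S' (fun i => t i.1 i.2)
    (fun i u => by
      rw [← LinearMap.comp_apply, ← LinearMap.lTensor_comp]
      have : (pb (n + 1) i).toLinearMap ∘ₗ (σ i.1 i.2).toLinearMap = LinearMap.id :=
        LinearMap.ext fun a => hσ2 i.1 i.2 a
      rw [this]; simp)
    (fun i j hij u => by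
      rw [← LinearMap.comp_apply, ← LinearMap.lTensor_comp, ← LinearMap.comp_apply,
        ← LinearMap.lTensor_comp]
      have : (pb (n + 1) i).toLinearMap ∘ₗ (σ j.1 j.2).toLinearMap =
        (G i j).toLinearMap ∘ₗ (pb n (q j i)).toLinearMap :=
        LinearMap.ext fun a => hG i j hij a
      rw [this])
    (fun i j hij u => by
      rw [← LinearMap.comp_apply, ← LinearMap.lTensor_comp, ← LinearMap.comp_apply,
        ← LinearMap.lTensor_comp]
      have : (pb n (q j i)).toLinearMap ∘ₗ (pb (n + 1) j).toLinearMap =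
        (pb n (q i j)).toLinearMap ∘ₗ (pb (n + 1) i).toLinearMap :=
        LinearMap.ext fun a =>
          pb_comm F hF pb hpb n hq i j (fun h => hij (Subtype.ext h)) a
      rw [this])
    (fun i j hij => by
      rcases lt_or_gt_of_ne (fun h => hij (Subtype.ext (Fin.ext h)) : i.1.1 ≠ j.1.1) with h | h
      · obtain ⟨e1, e2⟩ := pos_lt hq i.1 j.1 h
        rw [e1, e2]
        exact hc i.1 j.1 i.2 j.2 h
      · obtain ⟨e1, e2⟩ := pos_lt hq j.1 i.1 h
        rw [e1, e2]
        exact (hc j.1 i.1 j.2 i.2 h).symm)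
    (fun i => hS1 _ (hpb (n + 1) i).dga) (fun i => hS2 _ (hσ1 i.1 i.2)) (fun i => ht i.1 i.2)
  exact ⟨w, hw, fun i hi => h ⟨i, hi⟩⟩

/-- Extension of forms from the horn. -/
theorem horn_extend
    (F : ∀ k, SimplexForms k) (hF : ∀ k, IsPolyDeRham (F k))
    (pb : ∀ (k : ℕ) (i : Fin (k + 2)), (F (k + 1)).A →ₐ[ℂ] (F k).A)
    (hpb : ∀ (k : ℕ) (i : Fin (k + 2)),
      PullbackProp (F (k + 1)) (F k) (Fin.succAbove i) (pb k i))
    (n : ℕ) (k : Fin (n + 3))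
    (p : ℕ) (t : ∀ i : Fin (n + 3), i ≠ k → (F (n + 1)).A)
    (hc : HornCompat F pb n k t) (ht : ∀ i hi, t i hi ∈ (F (n + 1)).grading p) :
    ∃ w ∈ (F (n + 2)).grading p, ∀ i (hi : i ≠ k), pb (n + 1) i w = t i hi := by
  have hl : ∀ {a b : ℕ} (f : (F a).A →ₐ[ℂ] (F b).A) (x : ℂ ⊗[ℂ] (F a).A),
      TensorProduct.lid ℂ _ (LinearMap.lTensor ℂ f.toLinearMap x) =
        f (TensorProduct.lid ℂ _ x) := by
    intro a b f x
    induction x using TensorProduct.induction_on with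
    | zero => simp
    | tmul a f => simp
    | add u v hu hv => simp only [map_add, hu, hv]
  obtain ⟨w, hw, h⟩ := horn_extend_V F hF pb hpb n k ℂ
    (((F (n + 2)).grading p).comap (TensorProduct.lid ℂ _).toLinearMap)
    (((F (n + 1)).grading p).comap (TensorProduct.lid ℂ _).toLinearMap)
    (fun f hf w hw => by
      simp only [Submodule.mem_comap, LinearEquiv.coe_coe] at hw ⊢
      rw [hl]; exact hf.2 _ _ hw)
    (fun f hf w hw => by
      simp only [Submodule.mem_comap, LinearEquiv.coe_coe] at hw ⊢
      rw [hl]; exact hf.2 _ _ hw)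
    (fun i hi => 1 ⊗ₜ t i hi)
    (fun i j hi hj hij => by
      have := hc i j hi hj hij
      simp only [LinearMap.lTensor_tmul, AlgHom.toLinearMap_apply]
      rw [this])
    (fun i hi => by simpa using ht i hi)
  refine ⟨TensorProduct.lid ℂ _ w, hw, fun i hi => ?_⟩
  rw [← hl, h i hi]
  simp

/-- The homotopy, relative to the horn. -/
theorem horn_homotopy
    (F : ∀ k, SimplexForms k) (hF : ∀ k, IsPolyDeRham (F k))
    (pb : ∀ (k : ℕ) (i : Fin (k + 2)), (F (k + 1)).A →ₐ[ℂ] (F k).A)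
    (hpb : ∀ (k : ℕ) (i : Fin (k + 2)),
      PullbackProp (F (k + 1)) (F k) (Fin.succAbove i) (pb k i))
    (n : ℕ) (k : Fin (n + 3))
    : ∃ h : (F (n + 2)).A →ₗ[ℂ] (F (n + 2)).A,
    (∀ a ∈ (F (n + 2)).grading 0, h a = 0) ∧
    (∀ p, ∀ a ∈ (F (n + 2)).grading (p + 1), h a ∈ (F (n + 2)).grading p) ∧
    (∃ i, i ≠ k ∧ ∃ θ : (F (n + 1)).A →ₗ[ℂ] (F (n + 2)).A,
      ∀ a, (F (n + 2)).d (h a) + h ((F (n + 2)).d a) = a - θ (pb (n + 1) i a)) ∧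
    (∀ i, i ≠ k → ∃ ρ : (F (n + 1)).A →ₗ[ℂ] (F (n + 1)).A,
      ∀ a, pb (n + 1) i (h a) = ρ (pb (n + 1) i a)) := by
  obtain ⟨h, h0, h1, h2, h3⟩ := exists_homotopy (hF (n + 2)) k
  refine ⟨h, h0, h1, ?_, ?_⟩
  · obtain ⟨i, hi⟩ := exists_ne k
    obtain ⟨k', hk'⟩ := Fin.exists_succAbove_eq hi.symm
    obtain ⟨θ, hθ⟩ := exists_pull (hF (n + 1)) (F (n + 2)) (fun _ => k')
    have h4 := (hpb (n + 1) i).comp hθ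
    have h5 : (i.succAbove ∘ fun _ : Fin (n + 2 + 1) => k') = fun _ => k := by
      funext v; exact hk'
    rw [h5] at h4
    exact ⟨i, hi, θ.toLinearMap, fun a => h2 _ h4 a⟩
  · intro i hi
    obtain ⟨σ, -, hσ2, hσ3, -⟩ := exists_section F hF pb hpb n k i hi
    refine ⟨(pb (n + 1) i).toLinearMap ∘ₗ h ∘ₗ σ.toLinearMap, fun a => ?_⟩
    have h4 := h3 _ (by simp) _ hσ3 a
    simp only [AlgHom.comp_apply] at h4
    simp only [LinearMap.comp_apply, AlgHom.toLinearMap_apply]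
    rw [← h4, hσ2]

end Horn

/-! ### Part (a) -/

section PartA

theorem horn_part_a
    (F : ∀ k, SimplexForms k) (hF : ∀ k, IsPolyDeRham (F k))
    (pb : ∀ (k : ℕ) (i : Fin (k + 2)), (F (k + 1)).A →ₐ[ℂ] (F k).A)
    (hpb : ∀ (k : ℕ) (i : Fin (k + 2)),
      PullbackProp (F (k + 1)) (F k) (Fin.succAbove i) (pb k i))
    (n : ℕ) (k : Fin (n + 3)) :
    (∀ (q : ℕ) (t : ∀ i : Fin (n + 3), i ≠ k → (F (n + 1)).A),
      HornCompat F pb n k t →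
      (∀ (i : Fin (n + 3)) (hi : i ≠ k), t i hi ∈ (F (n + 1)).grading q) →
      (∀ (i : Fin (n + 3)) (hi : i ≠ k), (F (n + 1)).d (t i hi) = 0) →
      ∃ β : (F (n + 2)).A, β ∈ (F (n + 2)).grading q ∧ (F (n + 2)).d β = 0 ∧
        ∀ (i : Fin (n + 3)) (hi : i ≠ k), pb (n + 1) i β = t i hi) ∧
    (∀ (q : ℕ) (β : (F (n + 2)).A), β ∈ (F (n + 2)).grading (q + 1) →
      (F (n + 2)).d β = 0 →
      (∃ s : ∀ i : Fin (n + 3), i ≠ k → (F (n + 1)).A,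
        HornCompat F pb n k s ∧
        (∀ (i : Fin (n + 3)) (hi : i ≠ k), s i hi ∈ (F (n + 1)).grading q) ∧
        (∀ (i : Fin (n + 3)) (hi : i ≠ k),
          (F (n + 1)).d (s i hi) = pb (n + 1) i β)) →
      ∃ b ∈ (F (n + 2)).grading q, (F (n + 2)).d b = β) ∧
    (∀ β : (F (n + 2)).A, β ∈ (F (n + 2)).grading 0 → (F (n + 2)).d β = 0 →
      (∀ (i : Fin (n + 3)) (hi : i ≠ k), pb (n + 1) i β = 0) → β = 0) := by
  obtain ⟨h, h0, h1, ⟨i0, hi0, θ, h2⟩, h3⟩ := horn_homotopy F hF pb hpb n k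
  refine ⟨?_, ?_, ?_⟩
  · intro q t hc ht hd
    obtain ⟨e, he, het⟩ := horn_extend F hF pb hpb n k q t hc ht
    have hde : ∀ (i : Fin (n + 3)) (_ : i ≠ k), pb (n + 1) i ((F (n + 2)).d e) = 0 := by
      intro i hi
      rw [(hpb (n + 1) i).1, het i hi, hd i hi]
    refine ⟨e - h ((F (n + 2)).d e), Submodule.sub_mem _ he (h1 _ _ ((F (n + 2)).d_mem _ _ he)),
      ?_, ?_⟩
    · have := h2 ((F (n + 2)).d e)
      rw [(F (n + 2)).d_sq, hde i0 hi0, map_zero, map_zero, add_zero, sub_zero] at this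
      rw [map_sub, this, sub_self]
    · intro i hi
      obtain ⟨ρ, hρ⟩ := h3 i hi
      rw [map_sub, hρ, hde i hi, map_zero, sub_zero, het i hi]
  · rintro q β hβ hdβ ⟨s, hc, hs, hds⟩
    obtain ⟨σ, hσ, hσs⟩ := horn_extend F hF pb hpb n k q s hc hs
    have hz : pb (n + 1) i0 (β - (F (n + 2)).d σ) = 0 := by
      rw [map_sub, (hpb (n + 1) i0).1, hσs i0 hi0, hds i0 hi0, sub_self]
    refine ⟨σ + h (β - (F (n + 2)).d σ), Submodule.add_mem _ hσ
      (h1 _ _ (Submodule.sub_mem _ hβ ((F (n + 2)).d_mem _ _ hσ))), ?_⟩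
    have := h2 (β - (F (n + 2)).d σ)
    rw [hz, map_sub (F (n + 2)).d, (F (n + 2)).d_sq, hdβ, sub_zero, map_zero, map_zero,
      add_zero, sub_zero] at this
    rw [map_add, this]; abel
  · intro β hβ hdβ hz
    have := h2 β
    rw [h0 β hβ, hdβ, hz i0 hi0] at this
    simpa using this.symm

end PartA

/-! ### Graded pieces of `L ⊗ A ⊗ Ω` -/

section GradedTensor

theorem sgn_eq (n : ℤ) : sgn n = if Even n then 1 else -1 := by
  unfold sgn
  split_ifs with h
  · rw [h.neg_one_zpow]; rfl
  · rw [(Int.not_even_iff_odd.mp h).neg_one_zpow]; rfl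

theorem pow_eq_sgn (q : ℕ) : (-1 : ℤ) ^ q = sgn (q : ℤ) := by
  rw [sgn_eq]
  split_ifs with h
  · exact (Int.even_coe_nat q |>.mp h).neg_one_pow
  · refine Odd.neg_one_pow ?_
    rw [← Nat.not_even_iff_odd]
    exact fun h' => h ((Int.even_coe_nat q).mpr h')

theorem sgn_add (a b : ℤ) : sgn (a + b) = sgn a * sgn b := by
  simp only [sgn_eq, Int.even_add]
  by_cases ha : Even a <;> by_cases hb : Even b <;> simp [ha, hb]

/-- the sign, as a complex number -/
noncomputable def sc (n : ℤ) : ℂ := ((sgn n : ℤ) : ℂ)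

theorem sgn_smul {M : Type*} [AddCommGroup M] [Module ℂ M] (n : ℤ) (v : M) :
    sgn n • v = sc n • v := (Int.cast_smul_eq_zsmul ℂ _ _).symm

theorem sc_add (a b : ℤ) : sc (a + b) = sc a * sc b := by simp [sc, sgn_add]

theorem sc_sq (a : ℤ) : sc a ^ 2 = 1 := by
  simp only [sc, sgn_eq]; split_ifs <;> simp

theorem sc_one : sc 1 = -1 := by
  have : sgn 1 = -1 := by decide
  simp [sc, this]

theorem sc_two : sc 2 = 1 := by
  have : sgn 2 = 1 := by decide
  simp [sc, this]

theorem GradedDGLA.skew_sc (L : GradedDGLA) {p q : ℤ} {v w : L.L} (hv : v ∈ L.gr p)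
    (hw : w ∈ L.gr q) : L.br v w = -(sc (p * q) • L.br w v) := by
  rw [L.skew p q v w hv hw, sgn_smul]

theorem GradedDGLA.jacobi_sc (L : GradedDGLA) {p q : ℤ} {v w : L.L} (z : L.L) (hv : v ∈ L.gr p)
    (hw : w ∈ L.gr q) :
    L.br v (L.br w z) = L.br (L.br v w) z + sc (p * q) • L.br w (L.br v z) := by
  rw [L.jacobi p q v w z hv hw, sgn_smul]

theorem GradedDGLA.leib_sc (L : GradedDGLA) {p : ℤ} {v : L.L} (w : L.L) (hv : v ∈ L.gr p) :
    L.dL (L.br v w) = L.br (L.dL v) w + sc p • L.br v (L.dL w) := by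
  rw [L.leib p v w hv, sgn_smul]

theorem SimplexForms.leib_sc {k : ℕ} (Ω : SimplexForms k) {p : ℕ} {a : Ω.A} (b : Ω.A)
    (ha : a ∈ Ω.grading p) : Ω.d (a * b) = Ω.d a * b + sc (p : ℤ) • (a * Ω.d b) := by
  rw [Ω.leibniz p a b ha, pow_eq_sgn, sgn_smul]

theorem SimplexForms.gcomm_sc {k : ℕ} (Ω : SimplexForms k) {p q : ℕ} {a b : Ω.A}
    (ha : a ∈ Ω.grading p) (hb : b ∈ Ω.grading q) :
    a * b = sc ((p : ℤ) * q) • (b * a) := by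
  rw [Ω.gcomm p q a b ha hb, pow_eq_sgn, sgn_smul, Nat.cast_mul]

variable {k k' : ℕ} (Ω : SimplexForms k) (Ω' : SimplexForms k') (L : GradedDGLA)
  (A B : Type) [CommRing A] [Algebra ℂ A] [CommRing B] [Algebra ℂ B]

def Dg (m : Submodule ℂ A) (r : ℤ) : Submodule ℂ ((L.L ⊗[ℂ] A) ⊗[ℂ] Ω.A) :=
  Submodule.span ℂ {z | ∃ (p : ℤ) (q : ℕ) (x : L.L) (a : A) (α : Ω.A),
    p + q = r ∧ x ∈ L.gr p ∧ a ∈ m ∧ α ∈ Ω.grading q ∧ z = (x ⊗ₜ[ℂ] a) ⊗ₜ[ℂ] α}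

def IsD (D : (L.L ⊗[ℂ] A) ⊗[ℂ] Ω.A →ₗ[ℂ] (L.L ⊗[ℂ] A) ⊗[ℂ] Ω.A) : Prop :=
  ∀ (p : ℤ) (q : ℕ) (x : L.L) (a : A) (α : Ω.A), x ∈ L.gr p → α ∈ Ω.grading q →
    D ((x ⊗ₜ a) ⊗ₜ α) = ((L.dL x ⊗ₜ a) ⊗ₜ α) + sc p • ((x ⊗ₜ a) ⊗ₜ (Ω.d α))

def IsBr (Br : (L.L ⊗[ℂ] A) ⊗[ℂ] Ω.A →ₗ[ℂ] (L.L ⊗[ℂ] A) ⊗[ℂ] Ω.A →ₗ[ℂ]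
    (L.L ⊗[ℂ] A) ⊗[ℂ] Ω.A) : Prop :=
  ∀ (p p' : ℤ) (q q' : ℕ) (x y : L.L) (a b : A) (α β : Ω.A), x ∈ L.gr p → y ∈ L.gr p' →
    α ∈ Ω.grading q → β ∈ Ω.grading q' →
    Br ((x ⊗ₜ a) ⊗ₜ α) ((y ⊗ₜ b) ⊗ₜ β) =
      sc ((q : ℤ) * p') • ((L.br x y ⊗ₜ (a * b)) ⊗ₜ (α * β))

variable {Ω Ω' L A B}

theorem Dg_mem {m : Submodule ℂ A} {r : ℤ} (p : ℤ) (q : ℕ) {x : L.L} {a : A} {α : Ω.A}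
    (h : p + q = r) (hx : x ∈ L.gr p) (ha : a ∈ m) (hα : α ∈ Ω.grading q) :
    (x ⊗ₜ[ℂ] a) ⊗ₜ[ℂ] α ∈ Dg Ω L A m r :=
  Submodule.subset_span ⟨p, q, x, a, α, h, hx, ha, hα, rfl⟩

theorem Dg_map {M : Type*} [AddCommGroup M] [Module ℂ M] {m : Submodule ℂ A} {r : ℤ}
    {f : (L.L ⊗[ℂ] A) ⊗[ℂ] Ω.A →ₗ[ℂ] M} {N : Submodule ℂ M}
    (h : ∀ (p : ℤ) (q : ℕ) (x : L.L) (a : A) (α : Ω.A),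
      p + q = r → x ∈ L.gr p → a ∈ m → α ∈ Ω.grading q → f ((x ⊗ₜ[ℂ] a) ⊗ₜ[ℂ] α) ∈ N)
    {z : (L.L ⊗[ℂ] A) ⊗[ℂ] Ω.A} (hz : z ∈ Dg Ω L A m r) : f z ∈ N := by
  have : Dg Ω L A m r ≤ N.comap f := by
    refine Submodule.span_le.mpr ?_
    rintro _ ⟨p, q, x, a, α, h0, h1, h2, h3, rfl⟩
    exact h p q x a α h0 h1 h2 h3
  exact this hz

theorem Dg_ext {M : Type*} [AddCommGroup M] [Module ℂ M] {m : Submodule ℂ A} {r : ℤ}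
    (f g : (L.L ⊗[ℂ] A) ⊗[ℂ] Ω.A →ₗ[ℂ] M)
    (h : ∀ (p : ℤ) (q : ℕ) (x : L.L) (a : A) (α : Ω.A),
      p + q = r → x ∈ L.gr p → a ∈ m → α ∈ Ω.grading q →
      f ((x ⊗ₜ[ℂ] a) ⊗ₜ[ℂ] α) = g ((x ⊗ₜ[ℂ] a) ⊗ₜ[ℂ] α))
    {z : (L.L ⊗[ℂ] A) ⊗[ℂ] Ω.A} (hz : z ∈ Dg Ω L A m r) : f z = g z := by
  have : (f - g) z ∈ (⊥ : Submodule ℂ M) := Dg_map (fun p q x a α h0 h1 h2 h3 => by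
    rw [Submodule.mem_bot, LinearMap.sub_apply, h p q x a α h0 h1 h2 h3, sub_self]) hz
  rw [Submodule.mem_bot, LinearMap.sub_apply] at this
  exact sub_eq_zero.mp this

theorem Deg1m_eq (F : ∀ k, SimplexForms k) (L : GradedDGLA) (m : Submodule ℂ A) (k : ℕ) :
    Deg1m F L A m k = Dg (F k) L A m 1 := by
  apply le_antisymm
  · refine iSup_le fun q => ?_
    rintro _ ⟨z, rfl⟩
    induction z using TensorProduct.induction_on with
    | zero => simp
    | add u v hu hv => rw [map_add]; exact Submodule.add_mem _ hu hv
    | tmul w α =>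
      induction w using TensorProduct.induction_on with
      | zero => simp
      | add u v hu hv => rw [TensorProduct.add_tmul, map_add]; exact Submodule.add_mem _ hu hv
      | tmul x a => exact Dg_mem (1 - (q : ℤ)) q (by omega) x.2 a.2 α.2
  · refine Submodule.span_le.mpr ?_
    rintro _ ⟨p, q, x, a, α, h0, h1, h2, h3, rfl⟩
    obtain rfl : p = 1 - (q : ℤ) := by omega
    exact Submodule.mem_iSup_of_mem q ⟨((⟨x, h1⟩ : L.gr (1 - (q : ℤ))) ⊗ₜ (⟨a, h2⟩ : m)) ⊗ₜ
      (⟨α, h3⟩ : (F k).grading q), rfl⟩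

variable {D : (L.L ⊗[ℂ] A) ⊗[ℂ] Ω.A →ₗ[ℂ] (L.L ⊗[ℂ] A) ⊗[ℂ] Ω.A}
  {Br : (L.L ⊗[ℂ] A) ⊗[ℂ] Ω.A →ₗ[ℂ] (L.L ⊗[ℂ] A) ⊗[ℂ] Ω.A →ₗ[ℂ] (L.L ⊗[ℂ] A) ⊗[ℂ] Ω.A}
  {m m' m'' : Submodule ℂ A} {r r' r'' : ℤ} {u v w : (L.L ⊗[ℂ] A) ⊗[ℂ] Ω.A}

theorem D_mem (hD : IsD Ω L A D) (hr : r + 1 = r') (hu : u ∈ Dg Ω L A m r) :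
    D u ∈ Dg Ω L A m r' := by
  refine Dg_map (fun p q x a α h0 h1 h2 h3 => ?_) hu
  rw [hD p q x a α h1 h3]
  refine Submodule.add_mem _ (Dg_mem (p + 1) q (by omega) (L.d_mem _ _ h1) h2 h3) ?_
  exact Submodule.smul_mem _ _ (Dg_mem p (q + 1) (by push_cast; omega) h1 h2 (Ω.d_mem _ _ h3))

theorem Br_mem (hBr : IsBr Ω L A Br) (hm : ∀ a ∈ m, ∀ b ∈ m', a * b ∈ m'')
    (hr : r + r' = r'') (hu : u ∈ Dg Ω L A m r)
    (hv : v ∈ Dg Ω L A m' r') : Br u v ∈ Dg Ω L A m'' r'' := by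
  refine Dg_map (f := Br.flip v) (fun p q x a α h0 h1 h2 h3 => ?_) hu
  rw [LinearMap.flip_apply]
  refine Dg_map (fun p' q' y b β h0' h1' h2' h3' => ?_) hv
  rw [hBr p p' q q' x y a b α β h1 h1' h3 h3']
  exact Submodule.smul_mem _ _ (Dg_mem (p + p') (q + q') (by push_cast; omega) (L.br_mem _ _ _ _ h1 h1')
    (hm _ h2 _ h2') (SetLike.GradedMul.mul_mem h3 h3'))

theorem Br_zero (hBr : IsBr Ω L A Br) (hm : ∀ a ∈ m, ∀ b ∈ m', a * b = 0)
    (hu : u ∈ Dg Ω L A m r) (hv : v ∈ Dg Ω L A m' r') : Br u v = 0 := by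
  have := Br_mem (m'' := ⊥) hBr (fun a ha b hb => by simp [hm a ha b hb]) rfl hu hv
  have h2 := Dg_ext LinearMap.id 0 (fun p q x a α h0 h1 h2 h3 => by
    rw [Submodule.mem_bot] at h2
    simp [h2]) this
  simpa using h2

theorem D_D (hD : IsD Ω L A D) (hu : u ∈ Dg Ω L A m r) : D (D u) = 0 := by
  refine Dg_ext (D ∘ₗ D) 0 (fun p q x a α h0 h1 h2 h3 => ?_) hu
  rw [LinearMap.comp_apply, hD p q x a α h1 h3, map_add, map_smul,
    hD (p + 1) q _ a α (L.d_mem _ _ h1) h3, hD p (q + 1) x a _ h1 (Ω.d_mem _ _ h3), L.d_sq,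
    Ω.d_sq, sc_add]
  simp [sc_one]
  module

theorem D_Br (hD : IsD Ω L A D) (hBr : IsBr Ω L A Br) (hu : u ∈ Dg Ω L A m r)
    (hv : v ∈ Dg Ω L A m' r') : D (Br u v) = Br (D u) v + sc r • Br u (D v) := by
  refine Dg_ext (D ∘ₗ Br.flip v) (Br.flip v ∘ₗ D + sc r • Br.flip (D v))
    (fun p q x a α h0 h1 h2 h3 => ?_) hu
  refine Dg_ext (D ∘ₗ Br ((x ⊗ₜ[ℂ] a) ⊗ₜ[ℂ] α)) (Br (D ((x ⊗ₜ[ℂ] a) ⊗ₜ[ℂ] α)) +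
    sc r • (Br ((x ⊗ₜ[ℂ] a) ⊗ₜ[ℂ] α) ∘ₗ D)) (fun p' q' y b β h0' h1' h2' h3' => ?_) hv
  simp only [LinearMap.comp_apply, LinearMap.add_apply, LinearMap.smul_apply]
  rw [hBr p p' q q' x y a b α β h1 h1' h3 h3', map_smul,
    hD (p + p') (q + q') _ _ _ (L.br_mem _ _ _ _ h1 h1') (SetLike.GradedMul.mul_mem h3 h3'),
    hD p q x a α h1 h3, hD p' q' y b β h1' h3', map_add, map_add, map_smul, map_smul,
    LinearMap.add_apply, LinearMap.smul_apply,
    hBr (p + 1) p' q q' _ y a b α β (L.d_mem _ _ h1) h1' h3 h3',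
    hBr p p' (q + 1) q' x y a b _ β h1 h1' (Ω.d_mem _ _ h3) h3',
    hBr p (p' + 1) q q' x _ a b α β h1 (L.d_mem _ _ h1') h3 h3',
    hBr p p' q (q' + 1) x y a b α _ h1 h1' h3 (Ω.d_mem _ _ h3'),
    L.leib_sc y h1, Ω.leib_sc β h3, ← h0]
  simp only [TensorProduct.add_tmul, TensorProduct.tmul_add, ← TensorProduct.smul_tmul',
    TensorProduct.tmul_smul, Nat.cast_add, Nat.cast_one, mul_add, add_mul, one_mul,
    mul_one, sc_add]
  match_scalars <;> ring_nf <;> simp [sc_sq]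

theorem Br_skew (hBr : IsBr Ω L A Br) (hu : u ∈ Dg Ω L A m r)
    (hv : v ∈ Dg Ω L A m' r') : Br u v = -(sc (r * r') • Br v u) := by
  refine Dg_ext (Br.flip v) (-(sc (r * r') • Br v)) (fun p q x a α h0 h1 h2 h3 => ?_) hu
  refine Dg_ext (Br ((x ⊗ₜ[ℂ] a) ⊗ₜ[ℂ] α)) (-(sc (r * r') • Br.flip ((x ⊗ₜ[ℂ] a) ⊗ₜ[ℂ] α)))
    (fun p' q' y b β h0' h1' h2' h3' => ?_) hv
  simp only [LinearMap.neg_apply, LinearMap.smul_apply, LinearMap.flip_apply]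
  rw [hBr p p' q q' x y a b α β h1 h1' h3 h3', hBr p' p q' q y x b a β α h1' h1 h3' h3,
    L.skew_sc h1 h1', Ω.gcomm_sc h3 h3', mul_comm a b, ← h0, ← h0']
  simp only [TensorProduct.neg_tmul, ← TensorProduct.smul_tmul',
    TensorProduct.tmul_smul, mul_add, add_mul, sc_add]
  rw [mul_comm p (q' : ℤ)]
  match_scalars <;> ring_nf <;> simp [sc_sq]

theorem Br_jacobi (hBr : IsBr Ω L A Br) (hu : u ∈ Dg Ω L A m r)
    (hv : v ∈ Dg Ω L A m' r') (hw : w ∈ Dg Ω L A m'' r'') :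
    Br u (Br v w) = Br (Br u v) w + sc (r * r') • Br v (Br u w) := by
  refine Dg_ext (Br.flip (Br v w)) (Br.flip w ∘ₗ Br.flip v + sc (r * r') • (Br v ∘ₗ Br.flip w))
    (fun p q x a α h0 h1 h2 h3 => ?_) hu
  refine Dg_ext (Br ((x ⊗ₜ[ℂ] a) ⊗ₜ[ℂ] α) ∘ₗ Br.flip w)
    (Br.flip w ∘ₗ Br ((x ⊗ₜ[ℂ] a) ⊗ₜ[ℂ] α) +
      sc (r * r') • (Br.flip (Br ((x ⊗ₜ[ℂ] a) ⊗ₜ[ℂ] α) w)))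
    (fun p' q' y b β h0' h1' h2' h3' => ?_) hv
  refine Dg_ext (Br ((x ⊗ₜ[ℂ] a) ⊗ₜ[ℂ] α) ∘ₗ Br ((y ⊗ₜ[ℂ] b) ⊗ₜ[ℂ] β))
    (Br (Br ((x ⊗ₜ[ℂ] a) ⊗ₜ[ℂ] α) ((y ⊗ₜ[ℂ] b) ⊗ₜ[ℂ] β)) +
      sc (r * r') • (Br ((y ⊗ₜ[ℂ] b) ⊗ₜ[ℂ] β) ∘ₗ Br ((x ⊗ₜ[ℂ] a) ⊗ₜ[ℂ] α)))
    (fun p'' q'' z c γ h0'' h1'' h2'' h3'' => ?_) hw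
  simp only [LinearMap.add_apply, LinearMap.smul_apply, LinearMap.comp_apply]
  rw [hBr p p' q q' x y a b α β h1 h1' h3 h3', hBr p p'' q q'' x z a c α γ h1 h1'' h3 h3'',
    hBr p' p'' q' q'' y z b c β γ h1' h1'' h3' h3'', map_smul, map_smul, map_smul,
    LinearMap.smul_apply,
    hBr p (p' + p'') q (q' + q'') _ _ _ _ _ _ h1 (L.br_mem _ _ _ _ h1' h1'') h3
      (SetLike.GradedMul.mul_mem h3' h3''),
    hBr p' (p + p'') q' (q + q'') _ _ _ _ _ _ h1' (L.br_mem _ _ _ _ h1 h1'') h3'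
      (SetLike.GradedMul.mul_mem h3 h3''),
    hBr (p + p') p'' (q + q') q'' _ _ _ _ _ _ (L.br_mem _ _ _ _ h1 h1') h1''
      (SetLike.GradedMul.mul_mem h3 h3') h3'',
    L.jacobi_sc z h1 h1', ← mul_assoc β α γ, mul_assoc a b c, ← mul_assoc α β γ,
    Ω.gcomm_sc h3 h3', mul_left_comm b a c, ← h0, ← h0']
  simp only [TensorProduct.add_tmul, TensorProduct.tmul_add, ← TensorProduct.smul_tmul',
    TensorProduct.tmul_smul, smul_mul_assoc, Nat.cast_add, mul_add, add_mul, sc_add]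
  rw [mul_comm p (q' : ℤ)]
  match_scalars <;> ring_nf <;> simp [sc_sq]

end GradedTensor

/-! ### Naturality -/

section Naturality

variable {k k' : ℕ} {Ω : SimplexForms k} {Ω' : SimplexForms k'} {L : GradedDGLA}
  {A B : Type} [CommRing A] [Algebra ℂ A] [CommRing B] [Algebra ℂ B]
  {D : (L.L ⊗[ℂ] A) ⊗[ℂ] Ω.A →ₗ[ℂ] (L.L ⊗[ℂ] A) ⊗[ℂ] Ω.A}
  {Br : (L.L ⊗[ℂ] A) ⊗[ℂ] Ω.A →ₗ[ℂ] (L.L ⊗[ℂ] A) ⊗[ℂ] Ω.A →ₗ[ℂ] (L.L ⊗[ℂ] A) ⊗[ℂ] Ω.A}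
  {D' : (L.L ⊗[ℂ] A) ⊗[ℂ] Ω'.A →ₗ[ℂ] (L.L ⊗[ℂ] A) ⊗[ℂ] Ω'.A}
  {Br' : (L.L ⊗[ℂ] A) ⊗[ℂ] Ω'.A →ₗ[ℂ] (L.L ⊗[ℂ] A) ⊗[ℂ] Ω'.A →ₗ[ℂ] (L.L ⊗[ℂ] A) ⊗[ℂ] Ω'.A}
  {DB : (L.L ⊗[ℂ] B) ⊗[ℂ] Ω.A →ₗ[ℂ] (L.L ⊗[ℂ] B) ⊗[ℂ] Ω.A}
  {BrB : (L.L ⊗[ℂ] B) ⊗[ℂ] Ω.A →ₗ[ℂ] (L.L ⊗[ℂ] B) ⊗[ℂ] Ω.A →ₗ[ℂ] (L.L ⊗[ℂ] B) ⊗[ℂ] Ω.A}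
  {m m' : Submodule ℂ A} {mB : Submodule ℂ B} {r r' : ℤ} {u v : (L.L ⊗[ℂ] A) ⊗[ℂ] Ω.A}

theorem T_mem {f : Ω.A →ₐ[ℂ] Ω'.A} (hf : IsDgaHom Ω Ω' f) (hu : u ∈ Dg Ω L A m r) :
    LinearMap.lTensor (L.L ⊗[ℂ] A) f.toLinearMap u ∈ Dg Ω' L A m r := by
  refine Dg_map (fun p q x a α h0 h1 h2 h3 => ?_) hu
  exact Dg_mem p q h0 h1 h2 (hf.2 _ _ h3)

theorem T_D {f : Ω.A →ₐ[ℂ] Ω'.A} (hf : IsDgaHom Ω Ω' f) (hD : IsD Ω L A D) (hD' : IsD Ω' L A D')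
    (hu : u ∈ Dg Ω L A m r) : LinearMap.lTensor (L.L ⊗[ℂ] A) f.toLinearMap (D u) =
      D' (LinearMap.lTensor (L.L ⊗[ℂ] A) f.toLinearMap u) := by
  refine Dg_ext (LinearMap.lTensor (L.L ⊗[ℂ] A) f.toLinearMap ∘ₗ D)
    (D' ∘ₗ LinearMap.lTensor (L.L ⊗[ℂ] A) f.toLinearMap) (fun p q x a α h0 h1 h2 h3 => ?_) hu
  simp only [LinearMap.comp_apply, LinearMap.lTensor_tmul, AlgHom.toLinearMap_apply]
  rw [hD p q x a α h1 h3, hD' p q x a _ h1 (hf.2 _ _ h3), ← hf.1]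
  simp

theorem T_Br {f : Ω.A →ₐ[ℂ] Ω'.A} (hf : IsDgaHom Ω Ω' f) (hBr : IsBr Ω L A Br)
    (hBr' : IsBr Ω' L A Br') (hu : u ∈ Dg Ω L A m r) (hv : v ∈ Dg Ω L A m' r') :
    LinearMap.lTensor (L.L ⊗[ℂ] A) f.toLinearMap (Br u v) =
      Br' (LinearMap.lTensor (L.L ⊗[ℂ] A) f.toLinearMap u)
        (LinearMap.lTensor (L.L ⊗[ℂ] A) f.toLinearMap v) := by
  refine Dg_ext (LinearMap.lTensor (L.L ⊗[ℂ] A) f.toLinearMap ∘ₗ Br.flip v)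
    (Br'.flip (LinearMap.lTensor (L.L ⊗[ℂ] A) f.toLinearMap v) ∘ₗ
      LinearMap.lTensor (L.L ⊗[ℂ] A) f.toLinearMap) (fun p q x a α h0 h1 h2 h3 => ?_) hu
  simp only [LinearMap.comp_apply, LinearMap.lTensor_tmul, AlgHom.toLinearMap_apply,
    LinearMap.flip_apply]
  refine Dg_ext (LinearMap.lTensor (L.L ⊗[ℂ] A) f.toLinearMap ∘ₗ Br ((x ⊗ₜ[ℂ] a) ⊗ₜ[ℂ] α))
    (Br' ((x ⊗ₜ[ℂ] a) ⊗ₜ[ℂ] f α) ∘ₗ LinearMap.lTensor (L.L ⊗[ℂ] A) f.toLinearMap)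
    (fun p' q' y b β h0' h1' h2' h3' => ?_) hv
  simp only [LinearMap.comp_apply, LinearMap.lTensor_tmul, AlgHom.toLinearMap_apply]
  rw [hBr p p' q q' x y a b α β h1 h1' h3 h3',
    hBr' p p' q q' x y a b _ _ h1 h1' (hf.2 _ _ h3) (hf.2 _ _ h3')]
  simp

/-- Change of coefficients. -/
noncomputable abbrev CC (Ω : SimplexForms k) (L : GradedDGLA) (g : A →ₗ[ℂ] B) :
    (L.L ⊗[ℂ] A) ⊗[ℂ] Ω.A →ₗ[ℂ] (L.L ⊗[ℂ] B) ⊗[ℂ] Ω.A :=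
  TensorProduct.map (LinearMap.lTensor L.L g) LinearMap.id

theorem CC_mem {g : A →ₗ[ℂ] B} (hg : ∀ a ∈ m, g a ∈ mB) (hu : u ∈ Dg Ω L A m r) :
    CC Ω L g u ∈ Dg Ω L B mB r := by
  refine Dg_map (fun p q x a α h0 h1 h2 h3 => ?_) hu
  exact Dg_mem p q h0 h1 (hg _ h2) h3

theorem CC_D {g : A →ₗ[ℂ] B} (hD : IsD Ω L A D) (hDB : IsD Ω L B DB)
    (hu : u ∈ Dg Ω L A m r) : CC Ω L g (D u) = DB (CC Ω L g u) := by
  refine Dg_ext (CC Ω L g ∘ₗ D) (DB ∘ₗ CC Ω L g) (fun p q x a α h0 h1 h2 h3 => ?_) hu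
  simp only [LinearMap.comp_apply, LinearMap.lTensor_tmul, TensorProduct.map_tmul,
    LinearMap.id_apply]
  rw [hD p q x a α h1 h3, hDB p q x _ α h1 h3]
  simp

theorem CC_Br {g : A →ₐ[ℂ] B} (hBr : IsBr Ω L A Br) (hBrB : IsBr Ω L B BrB)
    (hu : u ∈ Dg Ω L A m r) (hv : v ∈ Dg Ω L A m' r') :
    CC Ω L g.toLinearMap (Br u v) = BrB (CC Ω L g.toLinearMap u) (CC Ω L g.toLinearMap v) := by
  refine Dg_ext (CC Ω L g.toLinearMap ∘ₗ Br.flip v)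
    (BrB.flip (CC Ω L g.toLinearMap v) ∘ₗ CC Ω L g.toLinearMap)
    (fun p q x a α h0 h1 h2 h3 => ?_) hu
  simp only [LinearMap.comp_apply, LinearMap.lTensor_tmul, TensorProduct.map_tmul,
    LinearMap.id_apply, AlgHom.toLinearMap_apply, LinearMap.flip_apply]
  refine Dg_ext (CC Ω L g.toLinearMap ∘ₗ Br ((x ⊗ₜ[ℂ] a) ⊗ₜ[ℂ] α))
    (BrB ((x ⊗ₜ[ℂ] g a) ⊗ₜ[ℂ] α) ∘ₗ CC Ω L g.toLinearMap)
    (fun p' q' y b β h0' h1' h2' h3' => ?_) hv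
  simp only [LinearMap.comp_apply, LinearMap.lTensor_tmul, TensorProduct.map_tmul,
    LinearMap.id_apply, AlgHom.toLinearMap_apply]
  rw [hBr p p' q q' x y a b α β h1 h1' h3 h3', hBrB p p' q q' x y _ _ α β h1 h1' h3 h3']
  simp

theorem CC_T (g : A →ₗ[ℂ] B) (f : Ω.A →ₗ[ℂ] Ω'.A) (u : (L.L ⊗[ℂ] A) ⊗[ℂ] Ω.A) :
    CC Ω' L g (LinearMap.lTensor (L.L ⊗[ℂ] A) f u) =
      LinearMap.lTensor (L.L ⊗[ℂ] B) f (CC Ω L g u) := by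
  simp only [CC, LinearMap.lTensor, ← LinearMap.comp_apply, ← TensorProduct.map_comp]
  simp

theorem CC_CC {C : Type} [CommRing C] [Algebra ℂ C] (g : A →ₗ[ℂ] B) (f : B →ₗ[ℂ] C)
    (u : (L.L ⊗[ℂ] A) ⊗[ℂ] Ω.A) : CC Ω L f (CC Ω L g u) = CC Ω L (f ∘ₗ g) u := by
  simp only [CC, LinearMap.lTensor, ← LinearMap.comp_apply, ← TensorProduct.map_comp]
  simp

theorem CC_id (u : (L.L ⊗[ℂ] A) ⊗[ℂ] Ω.A) : CC Ω L (LinearMap.id : A →ₗ[ℂ] A) u = u := by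
  simp [CC]

/-- Elements killed by the change of coefficients `g` have coefficients in `ker g`. -/
theorem mem_ker {g : A →ₗ[ℂ] B} {s : B →ₗ[ℂ] A} (hs : ∀ b, g (s b) = b)
    (hu : u ∈ Dg Ω L A m r) (h : CC Ω L g u = 0) : u ∈ Dg Ω L A (LinearMap.ker g) r := by
  have h1 : u = CC Ω L (LinearMap.id - s ∘ₗ g) u := by
    have h2 : CC Ω L (LinearMap.id - s ∘ₗ g) = CC Ω L LinearMap.id - CC Ω L (s ∘ₗ g) := by
      simp only [CC, LinearMap.lTensor_sub]
      exact LinearMap.rTensor_sub _ _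
    rw [h2, LinearMap.sub_apply, CC_id, ← CC_CC, h, map_zero, sub_zero]
  rw [h1]
  exact CC_mem (fun a _ => by simp [hs]) hu

theorem ker_CC {g : A →ₗ[ℂ] B} (hu : u ∈ Dg Ω L A (LinearMap.ker g) r) : CC Ω L g u = 0 := by
  refine Dg_ext (CC Ω L g) 0 (fun p q x a α h0 h1 h2 h3 => ?_) hu
  rw [LinearMap.mem_ker] at h2
  simp [h2]

/-- Homotopies. -/
theorem D_homotopy (hD : IsD Ω L A D) {h e : Ω.A →ₗ[ℂ] Ω.A}
    (h0 : ∀ a ∈ Ω.grading 0, h a = 0) (h1 : ∀ p, ∀ a ∈ Ω.grading (p + 1), h a ∈ Ω.grading p)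
    (h2 : ∀ a, Ω.d (h a) + h (Ω.d a) = a - e a) (hu : u ∈ Dg Ω L A m 2) :
    D (LinearMap.lTensor (L.L ⊗[ℂ] A) (h ∘ₗ (tau Ω).toLinearMap) u) -
      LinearMap.lTensor (L.L ⊗[ℂ] A) (h ∘ₗ (tau Ω).toLinearMap) (D u) =
      u - LinearMap.lTensor (L.L ⊗[ℂ] A) e u := by
  refine Dg_ext (D ∘ₗ LinearMap.lTensor (L.L ⊗[ℂ] A) (h ∘ₗ (tau Ω).toLinearMap) -
      LinearMap.lTensor (L.L ⊗[ℂ] A) (h ∘ₗ (tau Ω).toLinearMap) ∘ₗ D)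
    (LinearMap.id - LinearMap.lTensor (L.L ⊗[ℂ] A) e) (fun p q x a α g0 g1 g2 g3 => ?_) hu
  have hq : ∃ q', h α ∈ Ω.grading q' := by
    cases q with
    | zero => exact ⟨0, by rw [h0 α g3]; exact Submodule.zero_mem _⟩
    | succ q => exact ⟨q, h1 q α g3⟩
  obtain ⟨q', hq'⟩ := hq
  have t1 : tau Ω α = sc q • α := by rw [tau_of_mem Ω g3, pow_eq_sgn, sgn_smul]
  have t2 : tau Ω (Ω.d α) = -(sc q • Ω.d α) := by rw [tau_d, t1, map_smul]
  simp only [LinearMap.sub_apply, LinearMap.comp_apply, LinearMap.lTensor_tmul,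
    AlgHom.toLinearMap_apply, LinearMap.id_apply]
  rw [hD p q x a α g1 g3, t1, map_smul, TensorProduct.tmul_smul, map_smul,
    hD p q' x a _ g1 hq', map_add, map_smul, LinearMap.lTensor_tmul, LinearMap.lTensor_tmul,
    LinearMap.comp_apply, LinearMap.comp_apply, AlgHom.toLinearMap_apply,
    AlgHom.toLinearMap_apply, t1, t2, map_neg, map_smul, map_smul]
  have hs : sc p * sc q = 1 := by rw [← sc_add, g0, sc_two]
  have h3 : α = e α + Ω.d (h α) + h (Ω.d α) := by rw [add_assoc, h2]; abel
  have h4 : (x ⊗ₜ[ℂ] a) ⊗ₜ[ℂ] α - (x ⊗ₜ[ℂ] a) ⊗ₜ[ℂ] e α =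
      (x ⊗ₜ[ℂ] a) ⊗ₜ[ℂ] Ω.d (h α) + (x ⊗ₜ[ℂ] a) ⊗ₜ[ℂ] h (Ω.d α) := by
    rw [← TensorProduct.tmul_sub, ← TensorProduct.tmul_add, h2]
  rw [h4, TensorProduct.tmul_neg, TensorProduct.tmul_smul, TensorProduct.tmul_smul]
  have h5 : ∀ w : (L.L ⊗[ℂ] A) ⊗[ℂ] Ω.A, sc q • sc p • w = w := fun w => by
    rw [smul_smul, mul_comm, hs, one_smul]
  have h6 : ∀ w : (L.L ⊗[ℂ] A) ⊗[ℂ] Ω.A, sc p • -(sc q • w) = -w := fun w => by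
    rw [smul_neg, smul_smul, hs, one_smul]
  rw [smul_add, h5, h6]
  abel

theorem homotopy_mem {h : Ω.A →ₗ[ℂ] Ω.A}
    (h0 : ∀ a ∈ Ω.grading 0, h a = 0) (h1 : ∀ p, ∀ a ∈ Ω.grading (p + 1), h a ∈ Ω.grading p)
    (hu : u ∈ Dg Ω L A m 2) :
    LinearMap.lTensor (L.L ⊗[ℂ] A) (h ∘ₗ (tau Ω).toLinearMap) u ∈ Dg Ω L A m 1 := by
  refine Dg_map (fun p q x a α g0 g1 g2 g3 => ?_) hu
  have t1 : tau Ω α = sc q • α := by rw [tau_of_mem Ω g3, pow_eq_sgn, sgn_smul]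
  rw [LinearMap.lTensor_tmul, LinearMap.comp_apply, AlgHom.toLinearMap_apply, t1, map_smul,
    TensorProduct.tmul_smul]
  refine Submodule.smul_mem _ _ ?_
  cases q with
  | zero => rw [h0 α g3, TensorProduct.tmul_zero]; exact Submodule.zero_mem _
  | succ q => exact Dg_mem p q (by push_cast at g0; omega) g1 g2 (h1 q α g3)

end Naturality

/-! ### The obstruction -/

section Obstruction

theorem obstruction_closed {k : ℕ} {Ω : SimplexForms k} {L : GradedDGLA}
    {A : Type} [CommRing A] [Algebra ℂ A]
    {D : (L.L ⊗[ℂ] A) ⊗[ℂ] Ω.A →ₗ[ℂ] (L.L ⊗[ℂ] A) ⊗[ℂ] Ω.A}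
    {Br : (L.L ⊗[ℂ] A) ⊗[ℂ] Ω.A →ₗ[ℂ] (L.L ⊗[ℂ] A) ⊗[ℂ] Ω.A →ₗ[ℂ] (L.L ⊗[ℂ] A) ⊗[ℂ] Ω.A}
    (hD : IsD Ω L A D) (hBr : IsBr Ω L A Br) {m J : Submodule ℂ A}
    (hm : ∀ a ∈ m, ∀ b ∈ m, a * b ∈ m) (hJ : ∀ a ∈ J, ∀ b ∈ m, a * b = 0)
    {φ : (L.L ⊗[ℂ] A) ⊗[ℂ] Ω.A} (hφ : φ ∈ Dg Ω L A m 1)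
    (ho : D φ + (1 / 2 : ℂ) • Br φ φ ∈ Dg Ω L A J 2) :
    D (D φ + (1 / 2 : ℂ) • Br φ φ) = 0 := by
  have hDφ : D φ ∈ Dg Ω L A m 2 := D_mem hD (by norm_num) hφ
  have hBφ : Br φ φ ∈ Dg Ω L A m 2 := Br_mem hBr hm (by norm_num) hφ hφ
  have e1 : D (Br φ φ) = (2 : ℂ) • Br (D φ) φ := by
    rw [D_Br hD hBr hφ hφ, Br_skew hBr hφ hDφ, one_mul, sc_one, sc_two]
    module
  have e2 : Br φ (Br φ φ) = 0 := by
    have j := Br_jacobi hBr hφ hφ hφ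
    rw [Br_skew hBr hBφ hφ, mul_one, mul_one, sc_one, sc_two] at j
    have j3 : (3 : ℂ) • Br φ (Br φ φ) = 0 := by
      have : (3 : ℂ) • Br φ (Br φ φ) = Br φ (Br φ φ) -
        (-((1 : ℂ) • Br φ (Br φ φ)) + (-1 : ℂ) • Br φ (Br φ φ)) := by module
      rw [this]
      exact sub_eq_zero.mpr j
    exact (smul_eq_zero.mp j3).resolve_left (by norm_num)
  have e3 : Br (Br φ φ) φ = 0 := by
    rw [Br_skew hBr hBφ hφ, e2]; simp
  have e4 := Br_zero hBr hJ ho hφ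
  rw [map_add, LinearMap.add_apply, map_smul, LinearMap.smul_apply, e3, smul_zero, add_zero] at e4
  rw [map_add, D_D hD hφ, map_smul, e1, e4]; simp

theorem horn_part_b
    (F : ∀ k, SimplexForms k) (hF : ∀ k, IsPolyDeRham (F k))
    (pb : ∀ (k : ℕ) (i : Fin (k + 2)), (F (k + 1)).A →ₐ[ℂ] (F k).A)
    (hpb : ∀ (k : ℕ) (i : Fin (k + 2)),
      PullbackProp (F (k + 1)) (F k) (Fin.succAbove i) (pb k i))
    (n : ℕ) (k : Fin (n + 3))
    (A B : Type) [CommRing A] [Algebra ℂ A] [CommRing B] [Algebra ℂ B]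
    (mA : Submodule ℂ A) (mB : Submodule ℂ B)
    (hmA : ∀ a ∈ mA, ∀ b ∈ mA, a * b ∈ mA)
    (π : A →ₐ[ℂ] B) (s : B →ₗ[ℂ] A) (hs : ∀ b, π (s b) = b)
    (hsm : ∀ b ∈ mB, s b ∈ mA)
    (hJ : ∀ a ∈ mA, ∀ j : A, π j = 0 → a * j = 0)
    (L : GradedDGLA)
    (DA : ∀ m, (L.L ⊗[ℂ] A) ⊗[ℂ] (F m).A →ₗ[ℂ] (L.L ⊗[ℂ] A) ⊗[ℂ] (F m).A)
    (hDA : ∀ m, IsD (F m) L A (DA m))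
    (BrA : ∀ m, (L.L ⊗[ℂ] A) ⊗[ℂ] (F m).A →ₗ[ℂ]
          (L.L ⊗[ℂ] A) ⊗[ℂ] (F m).A →ₗ[ℂ] (L.L ⊗[ℂ] A) ⊗[ℂ] (F m).A)
    (hBrA : ∀ m, IsBr (F m) L A (BrA m))
    (DB : ∀ m, (L.L ⊗[ℂ] B) ⊗[ℂ] (F m).A →ₗ[ℂ] (L.L ⊗[ℂ] B) ⊗[ℂ] (F m).A)
    (hDB : ∀ m, IsD (F m) L B (DB m))
    (BrB : ∀ m, (L.L ⊗[ℂ] B) ⊗[ℂ] (F m).A →ₗ[ℂ]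
          (L.L ⊗[ℂ] B) ⊗[ℂ] (F m).A →ₗ[ℂ] (L.L ⊗[ℂ] B) ⊗[ℂ] (F m).A)
    (hBrB : ∀ m, IsBr (F m) L B (BrB m))
    (ψ : ∀ i : Fin (n + 3), i ≠ k → (L.L ⊗[ℂ] A) ⊗[ℂ] (F (n + 1)).A)
    (hψ : ∀ (i : Fin (n + 3)) (hi : i ≠ k), IsMCsimp F L A mA DA BrA (n + 1) (ψ i hi))
    (hc : ∀ (i j : Fin (n + 3)) (hi : i ≠ k) (hj : j ≠ k) (hij : i.1 < j.1),
          LinearMap.lTensor (L.L ⊗[ℂ] A)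
              (pb n ⟨i.1, by have := j.isLt; omega⟩).toLinearMap (ψ j hj) =
            LinearMap.lTensor (L.L ⊗[ℂ] A)
              (pb n ⟨j.1 - 1, by have := j.isLt; omega⟩).toLinearMap (ψ i hi))
    (φB : (L.L ⊗[ℂ] B) ⊗[ℂ] (F (n + 2)).A)
    (hφB : IsMCsimp F L B mB DB BrB (n + 2) φB)
    (hBψ : ∀ (i : Fin (n + 3)) (hi : i ≠ k),
          LinearMap.lTensor (L.L ⊗[ℂ] B) (pb (n + 1) i).toLinearMap φB =
            TensorProduct.map (LinearMap.lTensor L.L π.toLinearMap) LinearMap.id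
              (ψ i hi)) :
      ∃ φA : (L.L ⊗[ℂ] A) ⊗[ℂ] (F (n + 2)).A,
        IsMCsimp F L A mA DA BrA (n + 2) φA ∧
        (∀ (i : Fin (n + 3)) (hi : i ≠ k),
          LinearMap.lTensor (L.L ⊗[ℂ] A) (pb (n + 1) i).toLinearMap φA = ψ i hi) ∧
        TensorProduct.map (LinearMap.lTensor L.L π.toLinearMap) LinearMap.id φA = φB := by
  classical
  have hπs : π.toLinearMap ∘ₗ s = LinearMap.id := LinearMap.ext hs
  have hJA : ∀ a ∈ LinearMap.ker π.toLinearMap, ∀ b ∈ mA, a * b = 0 := fun a ha b hb => by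
    rw [mul_comm]; exact hJ b hb a (LinearMap.mem_ker.mp ha)
  have hJA2 : ∀ a ∈ mA, ∀ b ∈ LinearMap.ker π.toLinearMap, a * b = 0 := fun a ha b hb =>
    hJ a ha b (LinearMap.mem_ker.mp hb)
  have hψ1 : ∀ i hi, ψ i hi ∈ Dg (F (n + 1)) L A mA 1 := fun i hi => by
    rw [← Deg1m_eq]; exact (hψ i hi).1
  have hφB1 : φB ∈ Dg (F (n + 2)) L B mB 1 := by rw [← Deg1m_eq]; exact hφB.1
  -- a first lift
  obtain ⟨φ1, hφ1, hliftB⟩ : ∃ φ1 ∈ Dg (F (n + 2)) L A mA 1,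
      CC (F (n + 2)) L π.toLinearMap φ1 = φB :=
    ⟨CC (F (n + 2)) L s φB, CC_mem hsm hφB1, by rw [CC_CC, hπs, CC_id]⟩
  -- correct it on the horn
  have hS : ∀ {a b : ℕ} (f : (F a).A →ₐ[ℂ] (F b).A), IsDgaHom _ _ f →
      ∀ w ∈ Dg (F a) L A mA 1 ⊓ LinearMap.ker (CC (F a) L π.toLinearMap),
      LinearMap.lTensor (L.L ⊗[ℂ] A) f.toLinearMap w ∈
        Dg (F b) L A mA 1 ⊓ LinearMap.ker (CC (F b) L π.toLinearMap) := by
    intro a b f hf w hw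
    obtain ⟨hw1, hw2⟩ := Submodule.mem_inf.mp hw
    refine Submodule.mem_inf.mpr ⟨T_mem hf hw1, LinearMap.mem_ker.mpr ?_⟩
    rw [CC_T, LinearMap.mem_ker.mp hw2, map_zero]
  obtain ⟨δ, hδ, hδψ⟩ := horn_extend_V F hF pb hpb n k (L.L ⊗[ℂ] A)
    (Dg (F (n + 2)) L A mA 1 ⊓ LinearMap.ker (CC (F (n + 2)) L π.toLinearMap))
    (Dg (F (n + 1)) L A mA 1 ⊓ LinearMap.ker (CC (F (n + 1)) L π.toLinearMap))
    (fun f hf => hS f hf) (fun f hf => hS f hf)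
    (fun i hi => ψ i hi - LinearMap.lTensor (L.L ⊗[ℂ] A) (pb (n + 1) i).toLinearMap φ1)
    (fun i j hi hj hij => by
      obtain ⟨q, hq⟩ := exists_pos n
      obtain ⟨e1, e2⟩ := pos_lt hq i j hij
      have e3 : (pb n (q j i)).toLinearMap ∘ₗ (pb (n + 1) j).toLinearMap =
          (pb n (q i j)).toLinearMap ∘ₗ (pb (n + 1) i).toLinearMap :=
        LinearMap.ext fun a =>
          pb_comm F hF pb hpb n hq i j (fun h => by simp [h] at hij) a
      rw [e1, e2] at e3
      rw [map_sub, map_sub, hc i j hi hj hij, ← LinearMap.comp_apply, ← LinearMap.lTensor_comp,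
        e3, LinearMap.lTensor_comp, LinearMap.comp_apply])
    (fun i hi => by
      refine Submodule.mem_inf.mpr ⟨Submodule.sub_mem _ (hψ1 i hi)
        (T_mem (hpb (n + 1) i).dga hφ1), LinearMap.mem_ker.mpr ?_⟩
      rw [map_sub, CC_T, hliftB, hBψ i hi, sub_self])
  obtain ⟨φ, hφ, hφB', hφψ⟩ : ∃ φ ∈ Dg (F (n + 2)) L A mA 1,
      CC (F (n + 2)) L π.toLinearMap φ = φB ∧ ∀ i (hi : i ≠ k),
        LinearMap.lTensor (L.L ⊗[ℂ] A) (pb (n + 1) i).toLinearMap φ = ψ i hi := by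
    obtain ⟨hδ1, hδ2⟩ := Submodule.mem_inf.mp hδ
    refine ⟨φ1 + δ, Submodule.add_mem _ hφ1 hδ1, ?_, fun i hi => ?_⟩
    · rw [map_add, LinearMap.mem_ker.mp hδ2, hliftB, add_zero]
    · rw [map_add, hδψ i hi]; abel
  -- the obstruction
  set o := DA (n + 2) φ + (1 / 2 : ℂ) • BrA (n + 2) φ φ with ho
  have ho1 : o ∈ Dg (F (n + 2)) L A mA 2 := Submodule.add_mem _ (D_mem (hDA _) (by norm_num) hφ)
    (Submodule.smul_mem _ _ (Br_mem (hBrA _) hmA (by norm_num) hφ hφ))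
  have ho2 : CC (F (n + 2)) L π.toLinearMap o = 0 := by
    rw [ho, map_add, map_smul, CC_D (hDA _) (hDB _) hφ, CC_Br (hBrA _) (hBrB _) hφ hφ, hφB']
    exact hφB.2
  have ho3 : ∀ i (_ : i ≠ k),
      LinearMap.lTensor (L.L ⊗[ℂ] A) (pb (n + 1) i).toLinearMap o = 0 := by
    intro i hi
    rw [ho, map_add, map_smul, T_D (hpb (n + 1) i).dga (hDA _) (hDA _) hφ,
      T_Br (hpb (n + 1) i).dga (hBrA _) (hBrA _) hφ hφ, hφψ i hi]
    exact (hψ i hi).2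
  have ho4 : o ∈ Dg (F (n + 2)) L A (LinearMap.ker π.toLinearMap) 2 := mem_ker hs ho1 ho2
  have ho5 : DA (n + 2) o = 0 := obstruction_closed (hDA _) (hBrA _) hmA hJA hφ ho4
  -- kill it
  obtain ⟨h, h0, h1, ⟨i0, hi0, θ, h2⟩, h3⟩ := horn_homotopy F hF pb hpb n k
  obtain ⟨η, hη⟩ : ∃ η, η = LinearMap.lTensor (L.L ⊗[ℂ] A)
    (h ∘ₗ (tau (F (n + 2))).toLinearMap) o := ⟨_, rfl⟩
  have hη1 : η ∈ Dg (F (n + 2)) L A (LinearMap.ker π.toLinearMap) 1 := by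
    rw [hη]; exact homotopy_mem h0 h1 ho4
  have hη1' : η ∈ Dg (F (n + 2)) L A mA 1 := by
    rw [hη]; exact homotopy_mem h0 h1 ho1
  have hη2 : CC (F (n + 2)) L π.toLinearMap η = 0 := ker_CC hη1
  have hη3 : ∀ i (_ : i ≠ k),
      LinearMap.lTensor (L.L ⊗[ℂ] A) (pb (n + 1) i).toLinearMap η = 0 := by
    intro i hi
    obtain ⟨ρ, hρ⟩ := h3 i hi
    have e : (pb (n + 1) i).toLinearMap ∘ₗ (h ∘ₗ (tau (F (n + 2))).toLinearMap) =
        (ρ ∘ₗ (tau (F (n + 1))).toLinearMap) ∘ₗ (pb (n + 1) i).toLinearMap := by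
      refine LinearMap.ext fun a => ?_
      simp only [LinearMap.comp_apply, AlgHom.toLinearMap_apply]
      rw [hρ, dga_tau (hpb (n + 1) i).dga]
    rw [hη, ← LinearMap.comp_apply, ← LinearMap.lTensor_comp, e, LinearMap.lTensor_comp,
      LinearMap.comp_apply, ho3 i hi, map_zero]
  have hη4 : DA (n + 2) η = o := by
    have := D_homotopy (hDA (n + 2)) (e := θ ∘ₗ (pb (n + 1) i0).toLinearMap) h0 h1 h2 ho1
    have e : LinearMap.lTensor (L.L ⊗[ℂ] A) (θ ∘ₗ (pb (n + 1) i0).toLinearMap) o = 0 := by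
      rw [LinearMap.lTensor_comp, LinearMap.comp_apply, ho3 i0 hi0, map_zero]
    rw [ho5, map_zero, sub_zero, e, sub_zero] at this
    rw [hη, this]
  refine ⟨φ - η, ⟨?_, ?_⟩, ?_, ?_⟩
  · rw [Deg1m_eq]; exact Submodule.sub_mem _ hφ hη1'
  · rw [map_sub, map_sub, map_sub, LinearMap.sub_apply, LinearMap.sub_apply,
      Br_zero (hBrA _) hJA2 hφ hη1, Br_zero (hBrA _) hJA hη1 hφ, Br_zero (hBrA _) hJA hη1 hη1',
      hη4, ho]
    simp
  · intro i hi
    rw [map_sub, hφψ i hi, hη3 i hi, sub_zero]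
  · have : CC (F (n + 2)) L π.toLinearMap (φ - η) = φB := by rw [map_sub, hφB', hη2, sub_zero]
    exact this

end Obstruction

/-- (a) The restriction map `A^*(Δ_{n+2}) → A^*(Λ^k_{n+2})` to
the k-th horn is a quasi-isomorphism (bijective on cohomology, stated
elementwise); (b) consequently, the obstruction to extending a Maurer–Cartan
element of `L ⊗ m_A ⊗ A^*(Δ_•)` from the horn to the simplex along a small
extension `π : A → B` vanishes: given compatible Maurer–Cartan elements `ψ i`
on the faces of the horn over `A`, and a Maurer–Cartan element `φ_B` over `B`
on the whole simplex whose faces are the images of the `ψ i`, there is a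
Maurer–Cartan element `φ_A` over `A` on the whole simplex with faces `ψ i`
lifting `φ_B`. -/
theorem horn_quasi_iso_and_mc_extension
    (F : ∀ k, SimplexForms k) (hF : ∀ k, IsPolyDeRham (F k))
    (pb : ∀ (k : ℕ) (i : Fin (k + 2)), (F (k + 1)).A →ₐ[ℂ] (F k).A)
    (hpb : ∀ (k : ℕ) (i : Fin (k + 2)),
      PullbackProp (F (k + 1)) (F k) (Fin.succAbove i) (pb k i))
    (n : ℕ) (k : Fin (n + 3)) :
    -- (a) the restriction to the k-th horn is a quasi-isomorphism:
    -- surjectivity on H^{q+1}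
    ((∀ (q : ℕ) (t : ∀ i : Fin (n + 3), i ≠ k → (F (n + 1)).A),
      HornCompat F pb n k t →
      (∀ (i : Fin (n + 3)) (hi : i ≠ k), t i hi ∈ (F (n + 1)).grading (q + 1)) →
      (∀ (i : Fin (n + 3)) (hi : i ≠ k), (F (n + 1)).d (t i hi) = 0) →
      ∃ β : (F (n + 2)).A, β ∈ (F (n + 2)).grading (q + 1) ∧ (F (n + 2)).d β = 0 ∧
        ∃ s : ∀ i : Fin (n + 3), i ≠ k → (F (n + 1)).A,
          HornCompat F pb n k s ∧
          (∀ (i : Fin (n + 3)) (hi : i ≠ k), s i hi ∈ (F (n + 1)).grading q) ∧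
          (∀ (i : Fin (n + 3)) (hi : i ≠ k),
            (F (n + 1)).d (s i hi) = pb (n + 1) i β - t i hi)) ∧
    -- surjectivity on H⁰
    (∀ (t : ∀ i : Fin (n + 3), i ≠ k → (F (n + 1)).A),
      HornCompat F pb n k t →
      (∀ (i : Fin (n + 3)) (hi : i ≠ k), t i hi ∈ (F (n + 1)).grading 0) →
      (∀ (i : Fin (n + 3)) (hi : i ≠ k), (F (n + 1)).d (t i hi) = 0) →
      ∃ β : (F (n + 2)).A, β ∈ (F (n + 2)).grading 0 ∧ (F (n + 2)).d β = 0 ∧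
        ∀ (i : Fin (n + 3)) (hi : i ≠ k), pb (n + 1) i β = t i hi) ∧
    -- injectivity on H^{q+1}
    (∀ (q : ℕ) (β : (F (n + 2)).A), β ∈ (F (n + 2)).grading (q + 1) →
      (F (n + 2)).d β = 0 →
      (∃ s : ∀ i : Fin (n + 3), i ≠ k → (F (n + 1)).A,
        HornCompat F pb n k s ∧
        (∀ (i : Fin (n + 3)) (hi : i ≠ k), s i hi ∈ (F (n + 1)).grading q) ∧
        (∀ (i : Fin (n + 3)) (hi : i ≠ k),
          (F (n + 1)).d (s i hi) = pb (n + 1) i β)) →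
      ∃ b ∈ (F (n + 2)).grading q, (F (n + 2)).d b = β) ∧
    -- injectivity on H⁰
    (∀ β : (F (n + 2)).A, β ∈ (F (n + 2)).grading 0 → (F (n + 2)).d β = 0 →
      (∀ (i : Fin (n + 3)) (hi : i ≠ k), pb (n + 1) i β = 0) → β = 0)) ∧
    -- (b) vanishing of the obstruction to Maurer–Cartan horn extension along a
    -- small extension π : A → B
    (∀ (A B : Type) (_ : CommRing A) (_ : Algebra ℂ A) (_ : IsArtinianRing A)
        (_ : IsLocalRing A) (_ : CommRing B) (_ : Algebra ℂ B)
        (_ : IsArtinianRing B) (_ : IsLocalRing B)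
        (π : A →ₐ[ℂ] B), Function.Surjective π →
      (∀ a ∈ IsLocalRing.maximalIdeal A, ∀ j : A, π j = 0 → a * j = 0) →
      ∀ (L : GradedDGLA)
        (DA : ∀ m, (L.L ⊗[ℂ] A) ⊗[ℂ] (F m).A →ₗ[ℂ] (L.L ⊗[ℂ] A) ⊗[ℂ] (F m).A),
        (∀ (m : ℕ) (p : ℤ) (q : ℕ) (x : L.L) (a : A) (α : (F m).A),
          x ∈ L.gr p → α ∈ (F m).grading q →
          DA m ((x ⊗ₜ a) ⊗ₜ α) =
            ((L.dL x ⊗ₜ a) ⊗ₜ α) + sgn p • ((x ⊗ₜ a) ⊗ₜ ((F m).d α))) →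
      ∀ (BrA : ∀ m, (L.L ⊗[ℂ] A) ⊗[ℂ] (F m).A →ₗ[ℂ]
          (L.L ⊗[ℂ] A) ⊗[ℂ] (F m).A →ₗ[ℂ] (L.L ⊗[ℂ] A) ⊗[ℂ] (F m).A),
        (∀ (m : ℕ) (p p' : ℤ) (q q' : ℕ) (x y : L.L) (a b : A)
            (α β : (F m).A), x ∈ L.gr p → y ∈ L.gr p' →
          α ∈ (F m).grading q → β ∈ (F m).grading q' →
          BrA m ((x ⊗ₜ a) ⊗ₜ α) ((y ⊗ₜ b) ⊗ₜ β) =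
            sgn ((q : ℤ) * p') • ((L.br x y ⊗ₜ (a * b)) ⊗ₜ (α * β))) →
      ∀ (DB : ∀ m, (L.L ⊗[ℂ] B) ⊗[ℂ] (F m).A →ₗ[ℂ] (L.L ⊗[ℂ] B) ⊗[ℂ] (F m).A),
        (∀ (m : ℕ) (p : ℤ) (q : ℕ) (x : L.L) (a : B) (α : (F m).A),
          x ∈ L.gr p → α ∈ (F m).grading q →
          DB m ((x ⊗ₜ a) ⊗ₜ α) =
            ((L.dL x ⊗ₜ a) ⊗ₜ α) + sgn p • ((x ⊗ₜ a) ⊗ₜ ((F m).d α))) →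
      ∀ (BrB : ∀ m, (L.L ⊗[ℂ] B) ⊗[ℂ] (F m).A →ₗ[ℂ]
          (L.L ⊗[ℂ] B) ⊗[ℂ] (F m).A →ₗ[ℂ] (L.L ⊗[ℂ] B) ⊗[ℂ] (F m).A),
        (∀ (m : ℕ) (p p' : ℤ) (q q' : ℕ) (x y : L.L) (a b : B)
            (α β : (F m).A), x ∈ L.gr p → y ∈ L.gr p' →
          α ∈ (F m).grading q → β ∈ (F m).grading q' →
          BrB m ((x ⊗ₜ a) ⊗ₜ α) ((y ⊗ₜ b) ⊗ₜ β) =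
            sgn ((q : ℤ) * p') • ((L.br x y ⊗ₜ (a * b)) ⊗ₜ (α * β))) →
      -- compatible MC elements on the faces of the horn over A
      ∀ (ψ : ∀ i : Fin (n + 3), i ≠ k → (L.L ⊗[ℂ] A) ⊗[ℂ] (F (n + 1)).A),
        (∀ (i : Fin (n + 3)) (hi : i ≠ k),
          IsMCsimp F L A ((IsLocalRing.maximalIdeal A).restrictScalars ℂ) DA BrA
            (n + 1) (ψ i hi)) →
        (∀ (i j : Fin (n + 3)) (hi : i ≠ k) (hj : j ≠ k) (hij : i.1 < j.1),
          LinearMap.lTensor (L.L ⊗[ℂ] A)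
              (pb n ⟨i.1, by have := j.isLt; omega⟩).toLinearMap (ψ j hj) =
            LinearMap.lTensor (L.L ⊗[ℂ] A)
              (pb n ⟨j.1 - 1, by have := j.isLt; omega⟩).toLinearMap (ψ i hi)) →
      -- a compatible MC lift over B on the whole simplex
      ∀ (φB : (L.L ⊗[ℂ] B) ⊗[ℂ] (F (n + 2)).A),
        IsMCsimp F L B ((IsLocalRing.maximalIdeal B).restrictScalars ℂ) DB BrB
          (n + 2) φB →
        (∀ (i : Fin (n + 3)) (hi : i ≠ k),
          LinearMap.lTensor (L.L ⊗[ℂ] B) (pb (n + 1) i).toLinearMap φB =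
            TensorProduct.map (LinearMap.lTensor L.L π.toLinearMap) LinearMap.id
              (ψ i hi)) →
      -- then an extension to the whole simplex over A exists
      ∃ φA : (L.L ⊗[ℂ] A) ⊗[ℂ] (F (n + 2)).A,
        IsMCsimp F L A ((IsLocalRing.maximalIdeal A).restrictScalars ℂ) DA BrA
          (n + 2) φA ∧
        (∀ (i : Fin (n + 3)) (hi : i ≠ k),
          LinearMap.lTensor (L.L ⊗[ℂ] A) (pb (n + 1) i).toLinearMap φA = ψ i hi) ∧
        TensorProduct.map (LinearMap.lTensor L.L π.toLinearMap) LinearMap.id φA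
          = φB) := by
  obtain ⟨a1, a2, a3⟩ := horn_part_a F hF pb hpb n k
  refine ⟨⟨?_, a1 0, a2, a3⟩, ?_⟩
  · intro q t hc ht hd
    obtain ⟨β, h1, h2, h3⟩ := a1 (q + 1) t hc ht hd
    refine ⟨β, h1, h2, fun _ _ => 0, ?_, fun _ _ => Submodule.zero_mem _, fun i hi => ?_⟩
    · intro i j hi hj hij
      simp
    · rw [h3 i hi, map_zero, sub_self]
  · intro A B _ _ _ _ _ _ _ _ π hπ hJ L DA hDA BrA hBrA DB hDB BrB hBrB ψ hψ hc φB hφB hBψ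
    obtain ⟨s, hs⟩ := LinearMap.exists_rightInverse_of_surjective π.toLinearMap
      (LinearMap.range_eq_top.mpr hπ)
    have hs' : ∀ b, π (s b) = b := fun b => LinearMap.congr_fun hs b
    refine horn_part_b F hF pb hpb n k A B _ _ ?_ π s hs' ?_ ?_ L DA
      (fun m p q x a α h1 h2 => by rw [hDA m p q x a α h1 h2, sgn_smul]) BrA
      (fun m p p' q q' x y a b α β h1 h2 h3 h4 => by
        rw [hBrA m p p' q q' x y a b α β h1 h2 h3 h4, sgn_smul]) DB
      (fun m p q x a α h1 h2 => by rw [hDB m p q x a α h1 h2, sgn_smul]) BrB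
      (fun m p p' q q' x y a b α β h1 h2 h3 h4 => by
        rw [hBrB m p p' q q' x y a b α β h1 h2 h3 h4, sgn_smul]) ψ hψ hc φB hφB hBψ
    · intro a _ b hb
      exact Ideal.mul_mem_left _ a hb
    · intro b hb
      have hb' : b ∈ IsLocalRing.maximalIdeal B := hb
      rw [IsLocalRing.mem_maximalIdeal, mem_nonunits_iff] at hb'
      change s b ∈ IsLocalRing.maximalIdeal A
      rw [IsLocalRing.mem_maximalIdeal, mem_nonunits_iff]
      intro hu
      apply hb'
      have := hu.map π
      rwa [hs'] at this
    · intro a ha j hj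
      exact hJ a ha j hj
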